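/- arXiv:1906.00523 — 2 statements merged into one kernel-verified Lean document; each statement's English description precedes it below -/
import Mathlib

section
/- Let (γ₁,γ₂) be an admissible pair of regular curves in S², both closed with periods l₁, l₂ > 0, with lifts c₁, c₂, and suppose c₁(s+l₁) = −c₁(s) for all s ∈ ℝ. Then f_{γ₁,γ₂}(s₁+l₁, s₂) = −f_{γ₁,γ₂}(s₁,s₂) for all (s₁,s₂) ∈ ℝ²; in particular the image of f_{γ₁,γ₂} in S³ contains pairs of antipodal points, and its extrinsic diameter equals π. -/
noncomputable section

open Matrix

/-- Euclidean 3-space (as triples of reals). -/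
abbrev R3 : Type := Fin 3 → ℝ

/-- The Euclidean inner product on ℝ³. -/
def dot3 (a b : R3) : ℝ := a 0 * b 0 + a 1 * b 1 + a 2 * b 2

/-- The Euclidean norm on ℝ³. -/
def norm3 (a : R3) : ℝ := Real.sqrt (dot3 a a)

/-- The cross product on ℝ³. -/
def cross3 (a b : R3) : R3 :=
  ![a 1 * b 2 - a 2 * b 1, a 2 * b 0 - a 0 * b 2, a 0 * b 1 - a 1 * b 0]

/-- The determinant of three vectors in ℝ³. -/
def det3 (a b c : R3) : ℝ := dot3 a (cross3 b c)

/-- `γ : ℝ → ℝ³` is a regular curve in the unit sphere S²: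
it is smooth, takes values in S², and has nowhere-vanishing derivative. -/
structure IsRegularCurve (γ : ℝ → R3) : Prop where
  smooth : ContDiff ℝ (⊤ : ℕ∞) γ
  sphere : ∀ s, dot3 (γ s) (γ s) = 1
  reg : ∀ s, deriv γ s ≠ 0

/-- The geodesic curvature `κ(s) = det(γ, γ', γ'')/|γ'|³` of a curve in S². -/
def kappa (γ : ℝ → R3) (s : ℝ) : ℝ :=
  det3 (γ s) (deriv γ s) (deriv (deriv γ) s) / norm3 (deriv γ s) ^ 3

/-- The unit normal `n(s) = (γ × γ')/|γ'|` of a curve in S². -/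
def unitNormal (γ : ℝ → R3) (s : ℝ) : R3 :=
  (norm3 (deriv γ s))⁻¹ • cross3 (γ s) (deriv γ s)

/-- `γ` is closed of period `l > 0`. -/
def HasPeriod (γ : ℝ → R3) (l : ℝ) : Prop := 0 < l ∧ ∀ s, γ (s + l) = γ s

/-- 2×2 complex matrices. -/
abbrev Mat2 := Matrix (Fin 2) (Fin 2) ℂ

def E1 : Mat2 := !![0, Complex.I; Complex.I, 0]
def E2 : Mat2 := !![0, -1; 1, 0]
def E3 : Mat2 := !![Complex.I, 0; 0, -Complex.I]

/-- The identification of ℝ³ with su(2) via the orthonormal basis e₁, e₂, e₃. -/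
def toSu2 (v : R3) : Mat2 := (v 0 : ℂ) • E1 + (v 1 : ℂ) • E2 + (v 2 : ℂ) • E3

/-- The adjoint action `Ad(a)x = a x a⁻¹`. -/
def AdM (a x : Mat2) : Mat2 := a * x * a⁻¹

/-- `c : ℝ → SU(2)` is a lift of the regular curve `γ` in S²:
it is smooth (entrywise), takes values in SU(2), and satisfies
`Ad(c(s))e₃ = γ(s)` and `Ad(c(s))e₁ = γ'(s)/|γ'(s)|` under `toSu2`. -/
structure IsLift (γ : ℝ → R3) (c : ℝ → Mat2) : Prop where
  mem : ∀ s, c s ∈ Matrix.specialUnitaryGroup (Fin 2) ℂ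
  smooth : ∀ i j, ContDiff ℝ (⊤ : ℕ∞) fun s => c s i j
  ad3 : ∀ s, AdM (c s) E3 = toSu2 (γ s)
  ad1 : ∀ s, AdM (c s) E1 = toSu2 ((norm3 (deriv γ s))⁻¹ • deriv γ s)

/-- The entrywise derivative of a matrix-valued curve. -/
def matDeriv (c : ℝ → Mat2) (s : ℝ) : Mat2 :=
  Matrix.of fun i j => deriv (fun t => c t i j) s

/-- The map `f_{γ₁,γ₂}(s₁,s₂) = c₁(0)⁻¹ c₁(s₁) c₂(s₂)⁻¹ c₂(0)` associated to lifts `c₁, c₂`. -/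
def fmap (c1 c2 : ℝ → Mat2) (s1 s2 : ℝ) : Mat2 :=
  (c1 0)⁻¹ * c1 s1 * (c2 s2)⁻¹ * c2 0

/-- `(γ₁, γ₂)` is an admissible pair. -/
structure IsAdmissiblePair (γ1 γ2 : ℝ → R3) : Prop where
  reg1 : IsRegularCurve γ1
  reg2 : IsRegularCurve γ2
  param1 : ∀ s, norm3 (deriv γ1 s) ^ 2 * (1 + kappa γ1 s ^ 2) = 4
  param2 : ∀ s, norm3 (deriv γ2 s) ^ 2 * (1 + kappa γ2 s ^ 2) = 4
  curv : ∀ s1 s2, kappa γ2 s2 < kappa γ1 s1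

/-- The restriction of `γ` to `[a,b]` is a shell. -/
def IsShell (γ : ℝ → R3) (a b : ℝ) : Prop :=
  a < b ∧ Set.InjOn γ (Set.Ico a b) ∧ γ a = γ b ∧
    LinearIndependent ℝ ![deriv γ a, deriv γ b]

/-- A positive shell: `det(γ(a), γ'(a), γ'(b)) < 0`. -/
def IsPositiveShell (γ : ℝ → R3) (a b : ℝ) : Prop :=
  IsShell γ a b ∧ det3 (γ a) (deriv γ a) (deriv γ b) < 0

/-- A negative shell: `det(γ(a), γ'(a), γ'(b)) > 0`. -/
def IsNegativeShell (γ : ℝ → R3) (a b : ℝ) : Prop :=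
  IsShell γ a b ∧ 0 < det3 (γ a) (deriv γ a) (deriv γ b)

/-- The unit sphere S² in ℝ³. -/
def sphere2 : Set R3 := {x | dot3 x x = 1}

/-- The μ-circle with center `o ∈ S²`. -/
def muCircle (μ : ℝ) (o : R3) : Set R3 :=
  {x | dot3 x x = 1 ∧ dot3 x o = μ / Real.sqrt (1 + μ ^ 2)}

/-- The (open) interior domain of the μ-circle with center `o ∈ S²`. -/
def muDisk (μ : ℝ) (o : R3) : Set R3 :=
  {x | dot3 x x = 1 ∧ μ / Real.sqrt (1 + μ ^ 2) < dot3 x o}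

def normalize3 (v : R3) : R3 := (norm3 v)⁻¹ • v

/-- `Δ` is the interior domain of the shell `γ|_{[a,b]}`: it is a connected component of the
complement of the image of the shell in S², and for each `s ∈ (a,b)` the points obtained by
pushing `γ(s)` slightly in the direction `σ • n(s)` (σ = 1 for a positive shell, σ = -1 for a
negative shell) belong to `Δ`. -/
def IsInteriorDomain (γ : ℝ → R3) (a b σ : ℝ) (Δ : Set R3) : Prop :=
  (∃ p ∈ sphere2 \ γ '' Set.Icc a b,
      Δ = connectedComponentIn (sphere2 \ γ '' Set.Icc a b) p) ∧
    ∀ s ∈ Set.Ioo a b, ∃ ε > 0, ∀ δ ∈ Set.Ioo (0 : ℝ) ε,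
      normalize3 (γ s + (σ * δ) • unitNormal γ s) ∈ Δ

/-- The center `o_t = (μ γ(t) + n(t))/√(1+μ²)` of the tangent μ-circle to `γ` at `γ(t)`
on the normal side. -/
def tangentCenter (μ : ℝ) (γ : ℝ → R3) (t : ℝ) : R3 :=
  (Real.sqrt (1 + μ ^ 2))⁻¹ • (μ • γ t + unitNormal γ t)

/-- The rotation of ℝ³ through angle `θ` about the oriented (unit) axis `o`. -/
def rot3 (o : R3) (θ : ℝ) (x : R3) : R3 :=
  Real.cos θ • x + Real.sin θ • cross3 o x + ((1 - Real.cos θ) * dot3 o x) • o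

/-- A closed regular curve of period `l` is generic: every self-intersection is a
transversal double point. -/
def IsGeneric (γ : ℝ → R3) (l : ℝ) : Prop :=
  ∀ s t : ℝ, γ s = γ t → (¬∃ k : ℤ, s - t = k * l) →
    LinearIndependent ℝ ![deriv γ s, deriv γ t] ∧
      ∀ u : ℝ, γ u = γ s → (∃ k : ℤ, u - s = k * l) ∨ (∃ k : ℤ, u - t = k * l)

/-- The number of crossings (self-intersection points) of a closed curve of period `l`. -/
def crossings (γ : ℝ → R3) (l : ℝ) : ℕ :=
  Set.ncard {p : R3 | ∃ s t : ℝ, γ s = p ∧ γ t = p ∧ ¬∃ k : ℤ, s - t = k * l}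

/-- The spherical (geodesic) distance on S³, identified with SU(2):
`dist(A,B) = arccos(Re trace(A Bᴴ)/2)`, which corresponds to the round distance on the
unit sphere S³ ⊂ ℝ⁴. -/
def distS3 (A B : Mat2) : ℝ := Real.arccos ((Matrix.trace (A * Bᴴ)).re / 2)

/-- The extrinsic diameter of the image of the map `f` associated to the lifts `c₁, c₂`. -/
def extDiam (c1 c2 : ℝ → Mat2) : ℝ :=
  sSup {d : ℝ | ∃ s1 s2 u1 u2 : ℝ, d = distS3 (fmap c1 c2 s1 s2) (fmap c1 c2 u1 u2)}

/-- The parallel curve `γ^θ = (cos θ) γ + (sin θ) n`. -/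
def parallelCurve (γ : ℝ → R3) (θ : ℝ) (s : ℝ) : R3 :=
  Real.cos θ • γ s + Real.sin θ • unitNormal γ s

/-- The arclength-type parameter `s(t) = (1/2)∫₀ᵗ |γ'(u)|√(1+κ(u)²) du`. -/
def arcParam (γ : ℝ → R3) (t : ℝ) : ℝ :=
  (1 / 2) * ∫ u in (0 : ℝ)..t, norm3 (deriv γ u) * Real.sqrt (1 + kappa γ u ^ 2)

section InverseOfUnitary

variable {n α : Type*} [Fintype n] [DecidableEq n] [CommRing α] [StarRing α] {A : Matrix n n α}

theorem inv_eq_star_of_mem_unitaryGroup (hA : A ∈ unitaryGroup n α) : A⁻¹ = star A :=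
  inv_eq_right_inv (mem_unitaryGroup_iff.mp hA)

theorem inv_mem_unitaryGroup (hA : A ∈ unitaryGroup n α) : A⁻¹ ∈ unitaryGroup n α :=
  inv_eq_star_of_mem_unitaryGroup hA ▸ Unitary.star_mem hA

end InverseOfUnitary

theorem distS3_le_pi (A B : Mat2) : distS3 A B ≤ Real.pi :=
  Real.arccos_le_pi _

theorem distS3_self {A : Mat2} (hA : A ∈ unitaryGroup (Fin 2) ℂ) : distS3 A A = 0 := by
  have hA' : A * Aᴴ = 1 := mem_unitaryGroup_iff.mp hA
  simp [distS3, hA']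

theorem distS3_neg_right (A B : Mat2) : distS3 A (-B) = Real.pi - distS3 A B := by
  simp only [distS3, conjTranspose_neg, mul_neg, trace_neg, Complex.neg_re, neg_div,
    Real.arccos_neg]

theorem distS3_self_neg {A : Mat2} (hA : A ∈ unitaryGroup (Fin 2) ℂ) :
    distS3 A (-A) = Real.pi := by
  rw [distS3_neg_right, distS3_self hA, sub_zero]

theorem fmap_mem_unitaryGroup {c1 c2 : ℝ → Mat2}
    (hc1 : ∀ s, c1 s ∈ unitaryGroup (Fin 2) ℂ) (hc2 : ∀ s, c2 s ∈ unitaryGroup (Fin 2) ℂ)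
    (s1 s2 : ℝ) :
    fmap c1 c2 s1 s2 ∈ unitaryGroup (Fin 2) ℂ :=
  mul_mem (mul_mem (mul_mem (inv_mem_unitaryGroup (hc1 0)) (hc1 s1))
    (inv_mem_unitaryGroup (hc2 s2))) (hc2 0)

theorem antiperiodic_fmap_left {c1 : ℝ → Mat2} {l : ℝ} (hanti : Function.Antiperiodic c1 l)
    (c2 : ℝ → Mat2) (s2 : ℝ) : Function.Antiperiodic (fun s1 => fmap c1 c2 s1 s2) l := fun s1 => by
  simp only [fmap, hanti s1, mul_neg, neg_mul]

theorem distS3_le_extDiam (c1 c2 : ℝ → Mat2) (s1 s2 u1 u2 : ℝ) :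
    distS3 (fmap c1 c2 s1 s2) (fmap c1 c2 u1 u2) ≤ extDiam c1 c2 := by
  refine le_csSup ⟨Real.pi, ?_⟩ ⟨s1, s2, u1, u2, rfl⟩
  rintro _ ⟨_, _, _, _, rfl⟩
  exact distS3_le_pi _ _

theorem extDiam_le_pi (c1 c2 : ℝ → Mat2) : extDiam c1 c2 ≤ Real.pi := by
  refine csSup_le ⟨_, 0, 0, 0, 0, rfl⟩ ?_
  rintro _ ⟨_, _, _, _, rfl⟩
  exact distS3_le_pi _ _

theorem extDiam_eq_pi_of_antipodal {c1 c2 : ℝ → Mat2} {s1 s2 u1 u2 : ℝ}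
    (hmem : fmap c1 c2 s1 s2 ∈ unitaryGroup (Fin 2) ℂ)
    (hneg : fmap c1 c2 u1 u2 = -fmap c1 c2 s1 s2) : extDiam c1 c2 = Real.pi := by
  refine le_antisymm (extDiam_le_pi c1 c2) ?_
  calc Real.pi = distS3 (fmap c1 c2 s1 s2) (fmap c1 c2 u1 u2) := by
        rw [hneg, distS3_self_neg hmem]
    _ ≤ extDiam c1 c2 := distS3_le_extDiam c1 c2 s1 s2 u1 u2

theorem IsLift.mem_unitaryGroup {γ : ℝ → R3} {c : ℝ → Mat2} (hc : IsLift γ c) (s : ℝ) :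
    c s ∈ unitaryGroup (Fin 2) ℂ :=
  specialUnitaryGroup_le_unitaryGroup (hc.mem s)

/- By Cauchy–Schwarz `Re tr(A Bᴴ) / 2` lies in `[-1, 1]` for all `A, B ∈ U(2)`, so on `U(2)` too
`distS3` is a genuine angle: that of `A` and `B` as vectors of length `√2` in `ℂ²ˣ² = ℝ⁸`. -/
theorem stmt6_general {c1 c2 : ℝ → Mat2} {l : ℝ} (hc1 : ∀ s, c1 s ∈ unitaryGroup (Fin 2) ℂ)
    (hc2 : ∀ s, c2 s ∈ unitaryGroup (Fin 2) ℂ) (hanti : Function.Antiperiodic c1 l) :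
    (∀ s1 s2 : ℝ, fmap c1 c2 (s1 + l) s2 = -fmap c1 c2 s1 s2) ∧
    (∃ p q : Mat2, (∃ s1 s2 : ℝ, p = fmap c1 c2 s1 s2) ∧
      (∃ u1 u2 : ℝ, q = fmap c1 c2 u1 u2) ∧ q = -p) ∧
    extDiam c1 c2 = Real.pi := by
  have hneg (s1 s2 : ℝ) : fmap c1 c2 (s1 + l) s2 = -fmap c1 c2 s1 s2 :=
    antiperiodic_fmap_left hanti c2 s2 s1
  have hmem : fmap c1 c2 0 0 ∈ unitaryGroup (Fin 2) ℂ := fmap_mem_unitaryGroup hc1 hc2 0 0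
  exact ⟨hneg, ⟨_, _, ⟨0, 0, rfl⟩, ⟨0 + l, 0, rfl⟩, hneg 0 0⟩,
    extDiam_eq_pi_of_antipodal hmem (hneg 0 0)⟩

theorem stmt6 (γ1 γ2 : ℝ → R3) (l1 l2 : ℝ) (c1 c2 : ℝ → Mat2)
    (h : IsAdmissiblePair γ1 γ2) (h1 : HasPeriod γ1 l1) (h2 : HasPeriod γ2 l2)
    (hc1 : IsLift γ1 c1) (hc2 : IsLift γ2 c2)
    (hanti : ∀ s, c1 (s + l1) = -c1 s) :
    (∀ s1 s2 : ℝ, fmap c1 c2 (s1 + l1) s2 = -fmap c1 c2 s1 s2) ∧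
    (∃ p q : Mat2, (∃ s1 s2 : ℝ, p = fmap c1 c2 s1 s2) ∧
      (∃ u1 u2 : ℝ, q = fmap c1 c2 u1 u2) ∧ q = -p) ∧
    extDiam c1 c2 = Real.pi :=
  stmt6_general hc1.mem_unitaryGroup hc2.mem_unitaryGroup hanti
end
end

section
/- Let μ > 0 and let γ₂ be a closed regular curve in S² whose geodesic curvature satisfies max κ₂ < μ. Suppose the restriction of γ₂ to a closed interval [a₂,b₂] is a positive shell with image Σ₂ = γ₂([a₂,b₂]) and interior domain Δ. Then there exists a μ-circle C contained in the closure of Δ that meets Σ₂ in at least two points. -/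
noncomputable section

open Matrix

/-!
Near `t`, the curve `γ` stays outside the cap of curvature `μ` tangent to it on the left at `γ t`
and touches it only there, because `κ < μ`; by compactness, this holds up to some fixed distance `ε`
from `t`, so that any further contact of the shell with the cap is at least `ε` away.

Suppose that no tangent cap of curvature `μ` that contains no point of the shell touches it twice.
Near the corner of a positive shell, some tangent cap contains points of the shell, so by continuity
in `t` all of them do. Raise the curvature of the tangent cap at each `t` until it contains no point
of the shell; it then touches the shell again, still at least `ε` away from `t`. Stereographic
projection from the double point turns the shell into a plane curve that goes to infinity at both
ends, and these caps into discs on its left. The chords joining the two contacts of such discs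
cannot cross, whereas interlacing chords of the curve on its left are the diagonals of a convex
quadrilateral and do cross. Hence the disc tangent halfway between two contacts has its second
contact between them as well, and halving again and again contradicts `ε`.

So some tangent cap contains no point of the shell and touches it twice. Being connected and
lying on the side of the normal, the cap is contained in the interior domain.
-/

section

open Set Filter Topology
open Complex (I exp)
open scoped ComplexConjugate Real

/-! ### Chords of a plane curve -/

theorem mem_openSegment_of_sub_eq_smul {E : Type*} [AddCommGroup E] [Module ℝ E] {p z q w : E}
    {r s : ℝ} (hr : 0 < r) (hs : 0 < s) (hp : z - p = r • w) (hq : q - z = s • w) :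
    z ∈ openSegment ℝ p q := by
  have hrs : 0 < r + s := add_pos hr hs
  refine ⟨s / (r + s), r / (r + s), div_pos hs hrs, div_pos hr hrs, by field_simp; ring, ?_⟩
  rw [eq_add_of_sub_eq' hq, ← sub_sub_cancel z p, hp]
  match_scalars
  · field_simp; ring
  · field_simp; ring

theorem mem_Ioo_of_isPreconnected_of_ne {X : Type*} [TopologicalSpace X] {J : Set X}
    (hJ : IsPreconnected J) {g : X → ℝ} (hg : ContinuousOn g J) {A B : ℝ}
    (hA : ∀ u ∈ J, g u ≠ A) (hB : ∀ u ∈ J, g u ≠ B) {u v : X} (hu : u ∈ J)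
    (hgu : g u ∈ Ioo A B) (hv : v ∈ J) : g v ∈ Ioo A B := by
  have himage := (hJ.image g hg).ordConnected
  have hu' := mem_image_of_mem g hu
  have hv' := mem_image_of_mem g hv
  constructor
  · by_contra! h
    obtain ⟨w, hw, rfl⟩ := himage.out hv' hu' ⟨h, hgu.1.le⟩
    exact hA w hw rfl
  · by_contra! h
    obtain ⟨w, hw, rfl⟩ := himage.out hu' hv' ⟨hgu.2.le, h⟩
    exact hB w hw rfl

/-- A plane curve `c` on `(a, b)`, going to infinity at both ends, together with a continuous
determination `θ s t` of the direction from `c s` to `c t`, for `s ≤ t`. As `θ` is continuous up to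
the diagonal, `θ t t` is the direction of the tangent at `t`. -/
structure IsChordAngle (a b : ℝ) (c : ℝ → ℂ) (θ : ℝ → ℝ → ℝ) : Prop where
  continuousOn_curve : ContinuousOn c (Ioo a b)
  continuousOn_angle : ContinuousOn (fun p : ℝ × ℝ ↦ θ p.1 p.2) (Ioo a b ×ˢ Ioo a b)
  exists_sub_eq : ∀ s ∈ Ioo a b, ∀ t ∈ Ioo a b, s < t →
    ∃ r : ℝ, 0 < r ∧ c t - c s = r * exp (θ s t * I)
  tendsto_left : Tendsto (fun t ↦ ‖c t‖) (𝓝[>] a) atTop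
  tendsto_right : Tendsto (fun t ↦ ‖c t‖) (𝓝[<] b) atTop

/-- The curve `c` traversed backwards and reflected in the real axis. Both operations exchange
left and right, so that the composite preserves them while exchanging past and future. -/
def reflectCurve (c : ℝ → ℂ) (t : ℝ) : ℂ := conj (c (-t))

/-- The determination of chord directions for `reflectCurve c` induced by one for `c`. -/
def reflectAngle (θ : ℝ → ℝ → ℝ) (s t : ℝ) : ℝ := π - θ (-t) (-s)

/-- The signed distance of `z` from the tangent line at `c t`, positive on the left. -/
def tangentHeight (c : ℝ → ℂ) (θ : ℝ → ℝ → ℝ) (t : ℝ) (z : ℂ) : ℝ :=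
  ((z - c t) * exp (-(θ t t * I))).im

/-- The chord from `c x` to `c y` does not meet the curve in its interior, and at one of its
endpoints it leaves to the left of the tangent. -/
def IsLeftChord (a b : ℝ) (c : ℝ → ℂ) (θ : ℝ → ℝ → ℝ) (x y : ℝ) : Prop :=
  (∀ u ∈ Ioo a b, c u ∉ openSegment ℝ (c x) (c y)) ∧
    (0 < tangentHeight c θ x (c y) ∨ 0 < tangentHeight c θ y (c x))

theorem IsLeftChord.symm {a b x y : ℝ} {c : ℝ → ℂ} {θ : ℝ → ℝ → ℝ}
    (h : IsLeftChord a b c θ x y) : IsLeftChord a b c θ y x :=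
  ⟨fun u hu ↦ openSegment_symm ℝ (c x) (c y) ▸ h.1 u hu, h.2.symm⟩

theorem conj_mem_openSegment_conj_iff {z p q : ℂ} :
    conj z ∈ openSegment ℝ (conj p) (conj q) ↔ z ∈ openSegment ℝ p q := by
  have := image_openSegment ℝ Complex.conjAe.toLinearMap.toAffineMap p q
  exact (congrArg (conj z ∈ ·) this).symm ▸ Complex.conjAe.injective.mem_set_image

section

variable {c : ℝ → ℂ} {θ : ℝ → ℝ → ℝ}

theorem tangentHeight_reflect (t : ℝ) (z : ℂ) :
    tangentHeight (reflectCurve c) (reflectAngle θ) t (conj z) = tangentHeight c θ (-t) z := by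
  have hexp : exp (-((reflectAngle θ t t : ℝ) * I)) = -conj (exp (-(θ (-t) (-t) * I))) := by
    rw [← Complex.exp_conj, ← Complex.exp_sub_pi_mul_I]
    congr 1
    simp only [reflectAngle, map_neg, map_mul, Complex.conj_ofReal, Complex.conj_I]
    push_cast
    ring
  rw [tangentHeight, tangentHeight, reflectCurve, hexp, ← map_sub, mul_neg, ← map_mul,
    Complex.neg_im, Complex.conj_im, neg_neg]

theorem notMem_openSegment_reflect {a b x y : ℝ}
    (h : ∀ u ∈ Ioo a b, c u ∉ openSegment ℝ (c x) (c y)) :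
    ∀ u ∈ Ioo (-b) (-a),
      reflectCurve c u ∉ openSegment ℝ (reflectCurve c (-y)) (reflectCurve c (-x)) := by
  intro u hu
  rw [openSegment_symm]
  simpa only [reflectCurve, neg_neg, conj_mem_openSegment_conj_iff]
    using h (-u) ⟨lt_neg.mp hu.2, neg_lt.mp hu.1⟩

end

theorem exp_mul_im_exp_neg (r α β : ℝ) :
    (r * exp (α * I) * exp (-(β * I))).im = r * Real.sin (α - β) := by
  rw [mul_assoc, ← Complex.exp_add, Complex.im_ofReal_mul]
  congr 1
  rw [← Complex.exp_ofReal_mul_I_im]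
  push_cast
  ring_nf

theorem exp_ofReal_add_mul_I (α β : ℝ) :
    exp ((α + β : ℝ) * I) = exp (β * I) * exp (α * I) := by
  rw [← Complex.exp_add]
  push_cast
  ring_nf

namespace IsChordAngle

variable {a b : ℝ} {c : ℝ → ℂ} {θ : ℝ → ℝ → ℝ}

theorem reflect (H : IsChordAngle a b c θ) :
    IsChordAngle (-b) (-a) (reflectCurve c) (reflectAngle θ) where
  continuousOn_curve := Complex.continuous_conj.comp_continuousOn <|
    H.continuousOn_curve.comp continuousOn_neg fun t ht ↦ ⟨lt_neg.mp ht.2, neg_lt.mp ht.1⟩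
  continuousOn_angle := continuousOn_const.sub <| H.continuousOn_angle.comp
    (f := fun p : ℝ × ℝ ↦ (-p.2, -p.1)) (by fun_prop) fun p hp ↦
      ⟨⟨lt_neg.mp hp.2.2, neg_lt.mp hp.2.1⟩, lt_neg.mp hp.1.2, neg_lt.mp hp.1.1⟩
  exists_sub_eq s hs t ht hst := by
    obtain ⟨r, hr, h⟩ := H.exists_sub_eq (-t) ⟨lt_neg.mp ht.2, neg_lt.mp ht.1⟩ (-s)
      ⟨lt_neg.mp hs.2, neg_lt.mp hs.1⟩ (neg_lt_neg hst)
    refine ⟨r, hr, ?_⟩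
    rw [reflectCurve, reflectCurve, ← map_sub, ← neg_sub, h, reflectAngle]
    push_cast
    rw [← neg_sub, neg_mul, sub_mul, Complex.exp_neg, Complex.exp_sub_pi_mul_I, inv_neg,
      ← Complex.exp_neg, map_neg, map_mul, ← Complex.exp_conj]
    simp
  tendsto_left := by
    simpa only [reflectCurve, Complex.norm_conj, Function.comp_def] using
      H.tendsto_right.comp tendsto_neg_nhdsGT_neg
  tendsto_right := by
    simpa only [reflectCurve, Complex.norm_conj, Function.comp_def] using
      H.tendsto_left.comp tendsto_neg_nhdsLT_neg

theorem continuousOn_angle_left (H : IsChordAngle a b c θ) {t : ℝ} (ht : t ∈ Ioo a b) :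
    ContinuousOn (fun s ↦ θ s t) (Ioo a b) :=
  H.continuousOn_angle.comp (f := fun s ↦ (s, t)) (by fun_prop) fun _ hs ↦ ⟨hs, ht⟩

theorem continuousOn_angle_right (H : IsChordAngle a b c θ) {s : ℝ} (hs : s ∈ Ioo a b) :
    ContinuousOn (θ s) (Ioo a b) :=
  H.continuousOn_angle.comp (f := fun t ↦ (s, t)) (by fun_prop) fun _ ht ↦ ⟨hs, ht⟩

theorem injOn_curve (H : IsChordAngle a b c θ) : InjOn c (Ioo a b) := by
  have hlt {s t : ℝ} (hs : s ∈ Ioo a b) (ht : t ∈ Ioo a b) (hst : s < t) : c s ≠ c t := fun h ↦ by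
    obtain ⟨r, hr, hdiff⟩ := H.exists_sub_eq s hs t ht hst
    simp [h, hr.ne', Complex.exp_ne_zero] at hdiff
  intro s hs t ht h
  by_contra hne
  rcases lt_or_gt_of_ne hne with hst | hts
  exacts [hlt hs ht hst h, hlt ht hs hts h.symm]

theorem tangentHeight_pos_iff (H : IsChordAngle a b c θ) {t s : ℝ} (ht : t ∈ Ioo a b)
    (hs : s ∈ Ioo a b) (hts : t < s) :
    0 < tangentHeight c θ t (c s) ↔ 0 < Real.sin (θ t s - θ t t) := by
  obtain ⟨r, hr, h⟩ := H.exists_sub_eq t ht s hs hts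
  rw [tangentHeight, h, exp_mul_im_exp_neg, mul_pos_iff_of_pos_left hr]

theorem sub_ne_of_exp_eq_neg_one (H : IsChordAngle a b c θ) {v x y ε : ℝ} (hv : v ∈ Ioo a b)
    (hx : x ∈ Ioo a b) (hy : y ∈ Ioo a b) (hvx : v < x) (hvy : v < y)
    (hmiss : c v ∉ openSegment ℝ (c x) (c y)) (hε : exp (ε * I) = -1) :
    θ v y - θ v x ≠ ε := fun h ↦ by
  obtain ⟨r, hr, hcx⟩ := H.exists_sub_eq v hv x hx hvx
  obtain ⟨s, hs, hcy⟩ := H.exists_sub_eq v hv y hy hvy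
  rw [← add_eq_of_eq_sub' h.symm, exp_ofReal_add_mul_I, hε, neg_one_mul] at hcy
  refine hmiss (mem_openSegment_of_sub_eq_smul (w := -exp (θ v x * I)) hr hs ?_ ?_)
  · rw [← neg_sub, hcx, Complex.real_smul, mul_neg]
  · rw [hcy, Complex.real_smul]

theorem sub_ne_of_exp_eq_one (H : IsChordAngle a b c θ) {x v y ε : ℝ} (hx : x ∈ Ioo a b)
    (hy : y ∈ Ioo a b) (hxv : x < v) (hvy : v < y) (hmiss : c v ∉ openSegment ℝ (c x) (c y))
    (hε : exp (ε * I) = 1) : θ v y - θ x v ≠ ε := fun h ↦ by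
  have hv : v ∈ Ioo a b := ⟨hx.1.trans hxv, hvy.trans hy.2⟩
  obtain ⟨r, hr, hcx⟩ := H.exists_sub_eq x hx v hv hxv
  obtain ⟨s, hs, hcy⟩ := H.exists_sub_eq v hv y hy hvy
  rw [← add_eq_of_eq_sub' h.symm, exp_ofReal_add_mul_I, hε, one_mul] at hcy
  exact hmiss (mem_openSegment_of_sub_eq_smul hr hs hcx hcy)

theorem exists_curve_notMem_convex (H : IsChordAngle a b c θ) {x y : ℝ} (hx : x ∈ Ioo a b)
    (hy : y ∈ Ioo a b) :
    ∃ u ∈ Ioo a x, ∃ K : Set ℂ, Convex ℝ K ∧ c u ∉ K ∧ ∀ t ∈ Icc x y, c t ∈ K := by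
  obtain ⟨R, hR⟩ := (isCompact_Icc.image_of_continuousOn <| H.continuousOn_curve.mono
    (Icc_subset_Ioo hx.1 hy.2)).isBounded.subset_closedBall 0
  obtain ⟨u, hu, hux⟩ :=
    ((H.tendsto_left.eventually_gt_atTop R).and (Ioo_mem_nhdsGT hx.1)).exists
  exact ⟨u, hux, _, convex_closedBall 0 R, by simpa using hu, fun t ht ↦ hR (mem_image_of_mem c ht)⟩

/-- Seen from a point `c u` outside a convex set containing the arc, the directions of `c x` and
`c y` differ by less than `π`; moving `u` along the curve, the difference cannot reach `π` without
`c u` crossing the chord. -/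
theorem sub_mem_Ioo_of_lt (H : IsChordAngle a b c θ) {u x y : ℝ} (hu : u ∈ Ioo a x)
    (hxy : x < y) (hy : y ∈ Ioo a b)
    (hmiss : ∀ v ∈ Ioo a b, c v ∉ openSegment ℝ (c x) (c y)) :
    θ u y - θ u x ∈ Ioo (-π) π := by
  have hx : x ∈ Ioo a b := ⟨hu.1.trans hu.2, hxy.trans hy.2⟩
  have hpi : exp ((π : ℝ) * I) = -1 := Complex.exp_pi_mul_I
  have hpi' : exp ((-π : ℝ) * I) = -1 := by simp [Complex.exp_neg]
  have hleft {v : ℝ} (hv : v ∈ Ioo a x) : v ∈ Ioo a b := ⟨hv.1, hv.2.trans hx.2⟩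
  obtain ⟨u₀, hu₀, K, hK, hu₀K, harc⟩ := H.exists_curve_notMem_convex hx hy
  have hu₀arc (t : ℝ) (ht : t ∈ Icc x y) {ε : ℝ} : exp (ε * I) = -1 → θ u₀ t - θ u₀ x ≠ ε :=
    H.sub_ne_of_exp_eq_neg_one (hleft hu₀) hx (Icc_subset_Ioo hx.1 hy.2 ht) hu₀.2
      (hu₀.2.trans_le ht.1) fun h ↦
        hu₀K (hK.openSegment_subset (harc x (left_mem_Icc.mpr hxy.le)) (harc t ht) h)
  have hstart : θ u₀ y - θ u₀ x ∈ Ioo (-π) π :=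
    mem_Ioo_of_isPreconnected_of_ne (g := fun t ↦ θ u₀ t - θ u₀ x) isPreconnected_Icc
      (((H.continuousOn_angle_right (hleft hu₀)).mono (Icc_subset_Ioo hx.1 hy.2)).sub
        continuousOn_const)
      (hu₀arc · · hpi') (hu₀arc · · hpi) (left_mem_Icc.mpr hxy.le) (by simp [Real.pi_pos])
      (right_mem_Icc.mpr hxy.le)
  have hne (v : ℝ) (hv : v ∈ Ioo a x) {ε : ℝ} : exp (ε * I) = -1 → θ v y - θ v x ≠ ε :=
    H.sub_ne_of_exp_eq_neg_one (hleft hv) hx hy hv.2 (hv.2.trans hxy) (hmiss v (hleft hv))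
  exact mem_Ioo_of_isPreconnected_of_ne (g := fun v ↦ θ v y - θ v x) isPreconnected_Ioo
    (((H.continuousOn_angle_left hy).sub (H.continuousOn_angle_left hx)).mono fun _ ↦ hleft)
    (hne · · hpi') (hne · · hpi) hu₀ hstart hu

theorem sub_mem_Ioo_of_gt (H : IsChordAngle a b c θ) {u x y : ℝ} (hu : u ∈ Ioo y b)
    (hxy : x < y) (hx : x ∈ Ioo a b)
    (hmiss : ∀ v ∈ Ioo a b, c v ∉ openSegment ℝ (c x) (c y)) :
    θ y u - θ x u ∈ Ioo (-π) π := by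
  have := H.reflect.sub_mem_Ioo_of_lt (u := -u) ⟨neg_lt_neg hu.2, neg_lt_neg hu.1⟩
    (neg_lt_neg hxy) ⟨neg_lt_neg hx.2, neg_lt_neg hx.1⟩ (notMem_openSegment_reflect hmiss)
  simpa only [reflectAngle, neg_neg, sub_sub_sub_cancel_left] using this

theorem sub_mem_Icc_diag (H : IsChordAngle a b c θ) {x y : ℝ} (hx : x ∈ Ioo a b)
    (hxy : x < y) (hy : y ∈ Ioo a b)
    (hmiss : ∀ v ∈ Ioo a b, c v ∉ openSegment ℝ (c x) (c y)) :
    θ x y - θ x x ∈ Icc (-π) π := by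
  have hcont : ContinuousWithinAt (fun v ↦ θ v y - θ v x) (Ioo a x) x :=
    (((H.continuousOn_angle_left hy).sub (H.continuousOn_angle_left hx)) x hx).mono
      (Ioo_subset_Ioo_right hx.2.le)
  have hclosure : x ∈ closure (Ioo a x) := by
    rw [closure_Ioo hx.1.ne]
    exact right_mem_Icc.mpr hx.1.le
  simpa only [closure_Icc] using hcont.mem_closure hclosure fun v hv ↦
    Ioo_subset_Icc_self (H.sub_mem_Ioo_of_lt hv hxy hy hmiss)

theorem sub_mem_Ioo_zero_two_pi_of_height_pos (H : IsChordAngle a b c θ) {x u y : ℝ}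
    (hx : x ∈ Ioo a b) (hy : y ∈ Ioo a b)
    (hmiss : ∀ v ∈ Ioo a b, c v ∉ openSegment ℝ (c x) (c y))
    (hleft : 0 < tangentHeight c θ x (c y)) (hu : u ∈ Ioo x y) :
    θ u y - θ x u ∈ Ioo 0 (2 * π) := by
  have hxy : x < y := hu.1.trans hu.2
  have hdiag : θ x y - θ x x ∈ Ioo 0 π := by
    have hsin := (H.tangentHeight_pos_iff hx hy hxy).mp hleft
    obtain ⟨hge, hle⟩ := H.sub_mem_Icc_diag hx hxy hy hmiss
    refine ⟨?_, hle.lt_of_ne fun h ↦ by simp [h] at hsin⟩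
    by_contra! h
    exact hsin.not_ge (Real.sin_nonpos_of_nonpos_of_neg_pi_le h hge)
  have hstart : θ x y - θ x x ∈ Ioo 0 (2 * π) := ⟨hdiag.1, by linarith [hdiag.2, Real.pi_pos]⟩
  have hne (v : ℝ) (hv : v ∈ Ico x y) {ε : ℝ} (hε : exp (ε * I) = 1) (hε' : θ x y - θ x x ≠ ε) :
      θ v y - θ x v ≠ ε := by
    rcases hv.1.eq_or_lt with rfl | hxv
    · exact hε'
    · exact H.sub_ne_of_exp_eq_one hx hy hxv hv.2 (hmiss v ⟨hx.1.trans hxv, hv.2.trans hy.2⟩) hε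
  exact mem_Ioo_of_isPreconnected_of_ne (g := fun v ↦ θ v y - θ x v) isPreconnected_Ico
    (((H.continuousOn_angle_left hy).sub (H.continuousOn_angle_right hx)).mono
      fun v hv ↦ ⟨hx.1.trans_le hv.1, hv.2.trans hy.2⟩)
    (hne · · (by simp) hstart.1.ne') (hne · · (by simp) hstart.2.ne)
    (left_mem_Ico.mpr hxy) hstart (Ioo_subset_Ico_self hu)

theorem sub_mem_Ioo_zero_two_pi (H : IsChordAngle a b c θ) {x u y : ℝ} (hx : x ∈ Ioo a b)
    (hy : y ∈ Ioo a b) (hchord : IsLeftChord a b c θ x y) (hu : u ∈ Ioo x y) :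
    θ u y - θ x u ∈ Ioo 0 (2 * π) := by
  rcases hchord.2 with hleft | hleft
  · exact H.sub_mem_Ioo_zero_two_pi_of_height_pos hx hy hchord.1 hleft hu
  · have hleft' : 0 < tangentHeight (reflectCurve c) (reflectAngle θ) (-y)
        (reflectCurve c (-x)) := by
      rwa [reflectCurve, tangentHeight_reflect, neg_neg, neg_neg]
    have := H.reflect.sub_mem_Ioo_zero_two_pi_of_height_pos (u := -u)
      ⟨neg_lt_neg hy.2, neg_lt_neg hy.1⟩ ⟨neg_lt_neg hx.2, neg_lt_neg hx.1⟩
      (notMem_openSegment_reflect hchord.1) hleft' ⟨neg_lt_neg hu.2, neg_lt_neg hu.1⟩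
    simpa only [reflectAngle, neg_neg, sub_sub_sub_cancel_left] using this

theorem angle_le_diag_of_height_nonpos (H : IsChordAngle a b c θ) {t s : ℝ} (ht : t ∈ Ioo a b)
    (hs : s ∈ Ioo a b) (hts : t < s) (hside : ∀ v ∈ Ioo a b, tangentHeight c θ t (c v) ≤ 0) :
    θ t s ≤ θ t t := by
  by_contra! h
  have hcont : ContinuousOn (fun v ↦ θ t v - θ t t) (Icc t s) :=
    ((H.continuousOn_angle_right ht).mono (Icc_subset_Ioo ht.1 hs.2)).sub continuousOn_const
  obtain ⟨v, hv, hangle⟩ := intermediate_value_Icc hts.le hcont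
    (show min (θ t s - θ t t) (π / 2) ∈ Icc _ _ from
      ⟨by simp only [sub_self]; exact le_min (sub_pos.mpr h).le Real.pi_div_two_pos.le,
        min_le_left _ _⟩)
  dsimp only at hangle
  have hpos : 0 < θ t v - θ t t := hangle ▸ lt_min (sub_pos.mpr h) Real.pi_div_two_pos
  have hlt : θ t v - θ t t < π :=
    hangle ▸ (min_le_right _ _).trans_lt (half_lt_self Real.pi_pos)
  have htv : t < v := hv.1.lt_of_ne fun e ↦ by simp [← e] at hpos
  have hvI := Icc_subset_Ioo ht.1 hs.2 hv
  exact (hside v hvI).not_gt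
    ((H.tangentHeight_pos_iff ht hvI htv).mpr (Real.sin_pos_of_pos_of_lt_pi hpos hlt))

theorem diag_le_angle_of_height_nonpos (H : IsChordAngle a b c θ) {t s : ℝ} (ht : t ∈ Ioo a b)
    (hs : s ∈ Ioo a b) (hst : s < t) (hside : ∀ v ∈ Ioo a b, tangentHeight c θ t (c v) ≤ 0) :
    θ t t ≤ θ s t := by
  have := H.reflect.angle_le_diag_of_height_nonpos ⟨neg_lt_neg ht.2, neg_lt_neg ht.1⟩
    ⟨neg_lt_neg hs.2, neg_lt_neg hs.1⟩ (neg_lt_neg hst) fun v hv ↦ by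
      rw [reflectCurve, tangentHeight_reflect, neg_neg]
      exact hside (-v) ⟨lt_neg.mp hv.2, neg_lt.mp hv.1⟩
  simpa only [reflectAngle, neg_neg, sub_le_sub_iff_left] using this

end IsChordAngle

/-! ### Crossing chords -/

theorem sin_sub_pos_of_closed_quadrilateral {r₁ r₂ r₃ r₄ α₁ α₂ α₃ α₄ : ℝ} (h₁ : 0 < r₁)
    (h₃ : 0 < r₃) (h₄ : 0 < r₄)
    (hclosed : r₁ * exp (α₁ * I) + r₂ * exp (α₂ * I) + r₃ * exp (α₃ * I) + r₄ * exp (α₄ * I) = 0)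
    (h12 : α₁ < α₂) (h23 : α₂ < α₃) (h34 : α₃ < α₄) (h41 : α₄ < α₁ + 2 * π) :
    0 < Real.sin (α₂ - α₁) := by
  have hsum : r₃ * Real.sin (α₃ - α₂) + r₄ * Real.sin (α₄ - α₂) = r₁ * Real.sin (α₂ - α₁) := by
    have := congrArg (fun z ↦ (z * exp (-(α₂ * I))).im) hclosed
    simp only [add_mul, Complex.add_im, exp_mul_im_exp_neg, zero_mul, Complex.zero_im,
      sub_self, Real.sin_zero, mul_zero] at this
    rw [← neg_sub α₁, Real.sin_neg]
    linarith
  by_cases hlt : α₂ - α₁ < π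
  · exact Real.sin_pos_of_pos_of_lt_pi (sub_pos.mpr h12) hlt
  · have h₃' := mul_pos h₃ (Real.sin_pos_of_pos_of_lt_pi (x := α₃ - α₂) (by linarith)
      (by linarith))
    have h₄' := mul_pos h₄ (Real.sin_pos_of_pos_of_lt_pi (x := α₄ - α₂) (by linarith)
      (by linarith))
    exact (mul_pos_iff_of_pos_left h₁).mp (hsum ▸ add_pos h₃' h₄')

theorem nonempty_openSegment_inter_of_weights {E : Type*} [AddCommGroup E] [Module ℝ E]
    {z₁ z₂ z₃ z₄ : E} {w₁ w₂ w₃ w₄ : ℝ} (h₁ : 0 < w₁) (h₂ : 0 < w₂) (h₃ : 0 < w₃) (h₄ : 0 < w₄)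
    (hw : w₁ + w₃ = w₂ + w₄) (hz : w₁ • z₁ + w₃ • z₃ = w₂ • z₂ + w₄ • z₄) :
    (openSegment ℝ z₁ z₃ ∩ openSegment ℝ z₂ z₄).Nonempty := by
  refine ⟨(w₁ + w₃)⁻¹ • (w₁ • z₁ + w₃ • z₃),
    ⟨w₁ / (w₁ + w₃), w₃ / (w₁ + w₃), by positivity, by positivity, by field_simp, ?_⟩,
    ⟨w₂ / (w₂ + w₄), w₄ / (w₂ + w₄), by positivity, by positivity, by field_simp, ?_⟩⟩
  · simp only [div_eq_inv_mul, smul_add, mul_smul]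
  · simp only [hw, hz, div_eq_inv_mul, smul_add, mul_smul]

theorem exp_ofReal_add_pi_mul_I (x : ℝ) : exp ((x + π : ℝ) * I) = -exp (x * I) := by
  rw [← Complex.exp_add_pi_mul_I, Complex.ofReal_add, add_mul]

theorem exp_ofReal_add_two_pi_mul_I (x : ℝ) : exp ((x + 2 * π : ℝ) * I) = exp (x * I) := by
  rw [two_mul, ← add_assoc, exp_ofReal_add_pi_mul_I, exp_ofReal_add_pi_mul_I, neg_neg]

theorem im_conj_mul_eq_mul_sin {r s x y : ℝ} {z w : ℂ} (hz : z = r * exp (x * I))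
    (hw : w = s * exp (y * I)) : (conj z * w).im = r * s * Real.sin (y - x) := by
  have hconj : conj z * w = (s * exp (y * I) * exp (-(x * I))) * r := by
    rw [hz, hw, map_mul, ← Complex.exp_conj, map_mul, Complex.conj_ofReal, Complex.conj_ofReal,
      Complex.conj_I, mul_neg]
    ring
  rw [hconj, Complex.im_mul_ofReal, exp_mul_im_exp_neg]
  ring

theorem nonempty_diagonals_inter_of_corner_area_pos {z₁ z₂ z₃ z₄ : ℂ}
    (h₁ : 0 < (conj (z₁ - z₄) * (z₂ - z₁)).im) (h₂ : 0 < (conj (z₂ - z₁) * (z₃ - z₂)).im)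
    (h₃ : 0 < (conj (z₃ - z₂) * (z₄ - z₃)).im) (h₄ : 0 < (conj (z₄ - z₃) * (z₁ - z₄)).im) :
    (openSegment ℝ z₁ z₃ ∩ openSegment ℝ z₂ z₄).Nonempty := by
  refine nonempty_openSegment_inter_of_weights h₃ h₄ h₁ h₂ ?_ (Complex.ext ?_ ?_)
  all_goals
    simp only [Complex.mul_im, Complex.conj_re, Complex.conj_im, Complex.sub_re, Complex.sub_im,
      Complex.add_re, Complex.add_im, Complex.real_smul, Complex.mul_re, Complex.ofReal_re,
      Complex.ofReal_im]
    ring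

/-- A quadrilateral all of whose exterior angles, adding up to `2 * π`, are positive is convex. -/
theorem nonempty_diagonals_inter {z₁ z₂ z₃ z₄ : ℂ} {r₁ r₂ r₃ r₄ α β γ δ : ℝ}
    (h₁ : 0 < r₁) (h₂ : 0 < r₂) (h₃ : 0 < r₃) (h₄ : 0 < r₄)
    (h12 : z₂ - z₁ = r₁ * exp (α * I)) (h23 : z₃ - z₂ = r₂ * exp (β * I))
    (h34 : z₄ - z₃ = r₃ * exp (γ * I)) (h14 : z₄ - z₁ = r₄ * exp (δ * I))
    (hαβ : α < β) (hβγ : β < γ) (hγδ : γ - δ < π) (hδα : δ - α < π) :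
    (openSegment ℝ z₁ z₃ ∩ openSegment ℝ z₂ z₄).Nonempty := by
  have shift := exp_ofReal_add_two_pi_mul_I
  have h41 : z₁ - z₄ = r₄ * exp ((δ + π : ℝ) * I) := by
    rw [exp_ofReal_add_pi_mul_I, mul_neg, ← h14, neg_sub]
  have h12' : z₂ - z₁ = r₁ * exp ((α + 2 * π : ℝ) * I) := by rw [shift, h12]
  have hclosed : r₁ * exp (α * I) + r₂ * exp (β * I) + r₃ * exp (γ * I)
      + r₄ * exp ((δ + π : ℝ) * I) = 0 := by
    rw [← h12, ← h23, ← h34, ← h41]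
    ring
  refine nonempty_diagonals_inter_of_corner_area_pos
    (im_conj_mul_eq_mul_sin h41 h12' ▸ mul_pos (mul_pos h₄ h₁) ?_)
    (im_conj_mul_eq_mul_sin h12 h23 ▸ mul_pos (mul_pos h₁ h₂) ?_)
    (im_conj_mul_eq_mul_sin h23 h34 ▸ mul_pos (mul_pos h₂ h₃) ?_)
    (im_conj_mul_eq_mul_sin h34 h41 ▸ mul_pos (mul_pos h₃ h₄) ?_)
  · exact sin_sub_pos_of_closed_quadrilateral (r₂ := r₁) (α₃ := β + 2 * π) (α₄ := γ + 2 * π)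
      h₄ h₂ h₃ (by rw [shift, shift, shift, ← hclosed]; ring) (by linarith) (by linarith)
      (by linarith) (by linarith)
  · exact sin_sub_pos_of_closed_quadrilateral h₁ h₃ h₄ hclosed hαβ hβγ (by linarith) (by linarith)
  · exact sin_sub_pos_of_closed_quadrilateral (r₂ := r₃) (α₃ := δ + π) (α₄ := α + 2 * π)
      h₂ h₄ h₁ (by rw [shift, ← hclosed]; ring) hβγ (by linarith) (by linarith) (by linarith)
  · exact sin_sub_pos_of_closed_quadrilateral (r₂ := r₄) (α₃ := α + 2 * π) (α₄ := β + 2 * π)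
      h₃ h₁ h₂ (by rw [shift, shift, ← hclosed]; ring) (by linarith) (by linarith) (by linarith)
      (by linarith)

theorem IsChordAngle.nonempty_openSegment_inter {a b : ℝ} {c : ℝ → ℂ} {θ : ℝ → ℝ → ℝ}
    (H : IsChordAngle a b c θ) {s₁ s₂ s₃ s₄ : ℝ} (h₁ : s₁ ∈ Ioo a b) (h₄ : s₄ ∈ Ioo a b)
    (h12 : s₁ < s₂) (h23 : s₂ < s₃) (h34 : s₃ < s₄) (h13 : IsLeftChord a b c θ s₁ s₃)
    (h24 : IsLeftChord a b c θ s₂ s₄) :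
    (openSegment ℝ (c s₁) (c s₃) ∩ openSegment ℝ (c s₂) (c s₄)).Nonempty := by
  have h₂ : s₂ ∈ Ioo a b := ⟨h₁.1.trans h12, (h23.trans h34).trans h₄.2⟩
  have h₃ : s₃ ∈ Ioo a b := ⟨h₂.1.trans h23, h34.trans h₄.2⟩
  obtain ⟨r₁, hr₁, d12⟩ := H.exists_sub_eq _ h₁ _ h₂ h12
  obtain ⟨r₂, hr₂, d23⟩ := H.exists_sub_eq _ h₂ _ h₃ h23
  obtain ⟨r₃, hr₃, d34⟩ := H.exists_sub_eq _ h₃ _ h₄ h34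
  obtain ⟨r₄, hr₄, d14⟩ := H.exists_sub_eq _ h₁ _ h₄ (h12.trans (h23.trans h34))
  have turn₂ := H.sub_mem_Ioo_zero_two_pi h₁ h₃ h13 ⟨h12, h23⟩
  have turn₃ := H.sub_mem_Ioo_zero_two_pi h₂ h₄ h24 ⟨h23, h34⟩
  have turn₁ := H.sub_mem_Ioo_of_lt ⟨h₁.1, h12⟩ (h23.trans h34) h₄ h24.1
  have turn₄ := H.sub_mem_Ioo_of_gt ⟨h34, h₄.2⟩ (h12.trans h23) h₁ h13.1
  exact nonempty_diagonals_inter hr₁ hr₂ hr₃ hr₄ d12 d23 d34 d14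
    (sub_pos.mp turn₂.1) (sub_pos.mp turn₃.1) turn₄.2 turn₁.2

/-! ### Supporting discs of a plane curve -/

/-- A quadratic function of `z` with leading coefficient `k`, negative exactly on the open disc
of curvature `2 * k` (the half-plane, if `k = 0`) tangent to the curve `c` on its left at `c t`. -/
def discDefect (c : ℝ → ℂ) (θ : ℝ → ℝ → ℝ) (k t : ℝ) (z : ℂ) : ℝ :=
  k * ‖z - c t‖ ^ 2 - tangentHeight c θ t z

/-- The tangent disc of curvature `2 * k > 0` on the left of the curve at `t` contains no point of
the curve, its boundary passes through `c x` and `c y`, and `t` is one of `x` and `y`. -/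
structure IsContactChord (a b : ℝ) (c : ℝ → ℂ) (θ : ℝ → ℝ → ℝ) (k t x y : ℝ) : Prop where
  pos : 0 < k
  nonneg : ∀ s ∈ Ioo a b, 0 ≤ discDefect c θ k t (c s)
  left_eq_zero : discDefect c θ k t (c x) = 0
  right_eq_zero : discDefect c θ k t (c y) = 0
  eq_or_eq : t = x ∨ t = y

section

variable {a b k l t u x y : ℝ} {c : ℝ → ℂ} {θ : ℝ → ℝ → ℝ}

theorem discDefect_self (c : ℝ → ℂ) (θ : ℝ → ℝ → ℝ) (k t : ℝ) : discDefect c θ k t (c t) = 0 := by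
  simp [discDefect, tangentHeight]

theorem discDefect_combination {p q : ℂ} {r s : ℝ} (hrs : r + s = 1) :
    discDefect c θ k t (r • p + s • q) =
      r * discDefect c θ k t p + s * discDefect c θ k t q - k * (r * s * ‖p - q‖ ^ 2) := by
  obtain rfl := eq_sub_of_add_eq hrs
  simp only [discDefect, tangentHeight, Complex.sq_norm, Complex.normSq_apply, Complex.mul_im,
    Complex.sub_re, Complex.sub_im, Complex.add_re, Complex.add_im, Complex.smul_re,
    Complex.smul_im, smul_eq_mul]
  ring

theorem IsContactChord.symm (h : IsContactChord a b c θ k t x y) :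
    IsContactChord a b c θ k t y x :=
  ⟨h.pos, h.nonneg, h.right_eq_zero, h.left_eq_zero, h.eq_or_eq.symm⟩

theorem IsContactChord.isLeftChord (h : IsContactChord a b c θ k t x y) (hxy : c x ≠ c y) :
    IsLeftChord a b c θ x y := by
  constructor
  · rintro u hu ⟨r, s, hr, hs, hrs, hsum⟩
    have hneg : discDefect c θ k t (c u) = -(k * (r * s * ‖c x - c y‖ ^ 2)) := by
      rw [← hsum, discDefect_combination hrs, h.left_eq_zero, h.right_eq_zero]
      ring
    have := h.pos
    have := norm_pos_iff.mpr (sub_ne_zero.mpr hxy)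
    exact (h.nonneg u hu).not_gt (hneg ▸ neg_neg_of_pos (by positivity))
  · have height_pos {s : ℝ} (hs : discDefect c θ k t (c s) = 0) (hne : c s ≠ c t) :
        0 < tangentHeight c θ t (c s) := by
      rw [← sub_eq_zero.mp hs]
      exact mul_pos h.pos (pow_pos (norm_pos_iff.mpr (sub_ne_zero.mpr hne)) 2)
    rcases h.eq_or_eq with rfl | rfl
    exacts [.inl (height_pos h.right_eq_zero hxy.symm), .inr (height_pos h.left_eq_zero hxy)]

/-- The combination of the two defect functions without quadratic term is affine, so that its
values at a common point of the chords can be computed along either of them. -/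
theorem discDefect_eq_zero_of_openSegment_inter {p₁ q₁ p₂ q₂ : ℂ} (hk : 0 < k) (hl : 0 < l)
    (hp₁ : discDefect c θ k t p₁ = 0) (hq₁ : discDefect c θ k t q₁ = 0)
    (hp₂ : discDefect c θ l u p₂ = 0) (hq₂ : discDefect c θ l u q₂ = 0)
    (hp₂' : 0 ≤ discDefect c θ k t p₂) (hq₂' : 0 ≤ discDefect c θ k t q₂)
    (hp₁' : 0 ≤ discDefect c θ l u p₁) (hq₁' : 0 ≤ discDefect c θ l u q₁)
    (hinter : (openSegment ℝ p₁ q₁ ∩ openSegment ℝ p₂ q₂).Nonempty) :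
    discDefect c θ l u p₁ = 0 := by
  obtain ⟨_, ⟨r₁, s₁, hr₁, hs₁, hrs₁, rfl⟩, r₂, s₂, hr₂, hs₂, hrs₂, hz⟩ := hinter
  have affine {p q : ℂ} {r s : ℝ} (hrs : r + s = 1) :
      l * discDefect c θ k t (r • p + s • q) - k * discDefect c θ l u (r • p + s • q) =
        r * (l * discDefect c θ k t p - k * discDefect c θ l u p) +
          s * (l * discDefect c θ k t q - k * discDefect c θ l u q) := by
    rw [discDefect_combination hrs, discDefect_combination hrs]
    ring
  have hsum : r₁ * (k * discDefect c θ l u p₁) + s₁ * (k * discDefect c θ l u q₁) +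
      (r₂ * (l * discDefect c θ k t p₂) + s₂ * (l * discDefect c θ k t q₂)) = 0 := by
    have := (affine hrs₁).symm.trans ((congrArg
      (fun z ↦ l * discDefect c θ k t z - k * discDefect c θ l u z) hz.symm).trans (affine hrs₂))
    rw [hp₁, hq₁, hp₂, hq₂] at this
    linarith
  refine hp₁'.antisymm' (le_of_mul_le_mul_left ?_ (mul_pos hr₁ hk))
  have : 0 ≤ s₁ * (k * discDefect c θ l u q₁) +
      (r₂ * (l * discDefect c θ k t p₂) + s₂ * (l * discDefect c θ k t q₂)) := by positivity
  linarith

namespace IsChordAngle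

variable {m : ℝ}

theorem curvature_pos_of_isLeftChord (H : IsChordAngle a b c θ) (hx : x ∈ Ioo a b)
    (hy : y ∈ Ioo a b) (hm : m ∈ Ioo x y) (hchord : IsLeftChord a b c θ x y) (hk : 0 ≤ k)
    (hsupp : ∀ s ∈ Ioo a b, 0 ≤ discDefect c θ k m (c s)) : 0 < k := by
  refine hk.lt_of_ne fun hk₀ ↦ ?_
  have hside (s : ℝ) (hs : s ∈ Ioo a b) : tangentHeight c θ m (c s) ≤ 0 := by
    simpa [discDefect, ← hk₀] using hsupp s hs
  have hmI : m ∈ Ioo a b := ⟨hx.1.trans hm.1, hm.2.trans hy.2⟩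
  linarith [(H.sub_mem_Ioo_zero_two_pi hx hy hchord hm).1,
    H.angle_le_diag_of_height_nonpos hmI hy hm.2 hside,
    H.diag_le_angle_of_height_nonpos hmI hx hm.1 hside]

/-- Were the contact outside `[x, y]`, its chord would cross the chord from `x` to `y`, so that
`x` would be a contact as well. -/
theorem exists_contact_mem_Icc (H : IsChordAngle a b c θ) (hx : x ∈ Ioo a b) (hy : y ∈ Ioo a b)
    (hm : m ∈ Ioo x y) (hchord : IsContactChord a b c θ l t x y) {q : ℝ} (hq : q ∈ Ioo a b)
    (hqm : q ≠ m) (hcontact : IsContactChord a b c θ k m m q) :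
    ∃ q' ∈ Icc x y, q' ≠ m ∧ discDefect c θ k m (c q') = 0 := by
  have hmI : m ∈ Ioo a b := ⟨hx.1.trans hm.1, hm.2.trans hy.2⟩
  have hleft := hchord.isLeftChord (H.injOn_curve.ne hx hy (hm.1.trans hm.2).ne)
  have hleft' := hcontact.isLeftChord (H.injOn_curve.ne hmI hq hqm.symm)
  have contact_of_inter
      (h : (openSegment ℝ (c x) (c y) ∩ openSegment ℝ (c m) (c q)).Nonempty) :
      discDefect c θ k m (c x) = 0 :=
    discDefect_eq_zero_of_openSegment_inter hchord.pos hcontact.pos hchord.left_eq_zero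
      hchord.right_eq_zero hcontact.left_eq_zero hcontact.right_eq_zero (hchord.nonneg m hmI)
      (hchord.nonneg q hq) (hcontact.nonneg x hx) (hcontact.nonneg y hy) h
  have hxIcc : x ∈ Icc x y := left_mem_Icc.mpr (hm.1.trans hm.2).le
  by_cases hqx : q < x
  · have := H.nonempty_openSegment_inter hq hy hqx hm.1 hm.2 hleft'.symm hleft
    rw [inter_comm, openSegment_symm ℝ (c q)] at this
    exact ⟨x, hxIcc, hm.1.ne, contact_of_inter this⟩
  by_cases hyq : y < q
  · have := H.nonempty_openSegment_inter hx hq hm.1 hm.2 hyq hleft hleft'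
    exact ⟨x, hxIcc, hm.1.ne, contact_of_inter this⟩
  · exact ⟨q, ⟨not_lt.mp hqx, not_lt.mp hyq⟩, hqm, hcontact.right_eq_zero⟩

end IsChordAngle

/-- A choice of supporting tangent discs on the left of the curve at all parameters, each of which
is a half-plane or touches the curve again. -/
structure IsTouchingFamily (a b : ℝ) (c : ℝ → ℂ) (θ : ℝ → ℝ → ℝ) (k : ℝ → ℝ) : Prop where
  curvature_nonneg : ∀ t ∈ Ioo a b, 0 ≤ k t
  defect_nonneg : ∀ t ∈ Ioo a b, ∀ s ∈ Ioo a b, 0 ≤ discDefect c θ (k t) t (c s)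
  exists_contact : ∀ t ∈ Ioo a b, k t = 0 ∨
    ∃ q ∈ Ioo a b, q ≠ t ∧ discDefect c θ (k t) t (c q) = 0

namespace IsTouchingFamily

variable {κ : ℝ → ℝ}

theorem isContactChord (hκ : IsTouchingFamily a b c θ κ) {q : ℝ} (ht : t ∈ Ioo a b)
    (hpos : 0 < κ t) (hq : discDefect c θ (κ t) t (c q) = 0) :
    IsContactChord a b c θ (κ t) t t q :=
  ⟨hpos, hκ.defect_nonneg t ht, discDefect_self c θ _ t, hq, .inl rfl⟩

theorem exists_isContactChord_half (hκ : IsTouchingFamily a b c θ κ) (H : IsChordAngle a b c θ)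
    (hx : x ∈ Ioo a b) (hy : y ∈ Ioo a b) (hxy : y ≠ x)
    (hchord : IsContactChord a b c θ (κ t) t x y) :
    ∃ t' ∈ Ioo a b, ∃ q ∈ Ioo a b, q ≠ t' ∧ IsContactChord a b c θ (κ t') t' t' q ∧
      |q - t'| ≤ |y - x| / 2 := by
  wlog h : x < y generalizing x y
  · rw [abs_sub_comm y x]
    exact this hy hx hxy.symm hchord.symm (hxy.lt_of_le (not_lt.mp h))
  rw [abs_of_pos (sub_pos.mpr h)]
  set m := (x + y) / 2 with hm_def
  have hm : m ∈ Ioo x y := ⟨by linarith, by linarith⟩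
  have hmI : m ∈ Ioo a b := ⟨hx.1.trans hm.1, hm.2.trans hy.2⟩
  have hpos : 0 < κ m := H.curvature_pos_of_isLeftChord hx hy hm
    (hchord.isLeftChord (H.injOn_curve.ne hx hy h.ne)) (hκ.curvature_nonneg m hmI)
    (hκ.defect_nonneg m hmI)
  obtain ⟨q, hq, hqm, hq₀⟩ := (hκ.exists_contact m hmI).resolve_left hpos.ne'
  obtain ⟨q', hq', hqm', hq₀'⟩ := H.exists_contact_mem_Icc hx hy hm hchord hq hqm
    (hκ.isContactChord hmI hpos hq₀)
  exact ⟨m, hmI, q', Icc_subset_Ioo hx.1 hy.2 hq', hqm', hκ.isContactChord hmI hpos hq₀',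
    abs_le.mpr ⟨by linarith [hq'.1], by linarith [hq'.2]⟩⟩

theorem exists_contact_abs_sub_lt (hκ : IsTouchingFamily a b c θ κ) (H : IsChordAngle a b c θ)
    (ht : t ∈ Ioo a b) (hpos : 0 < κ t) {ε : ℝ} (hε : 0 < ε) :
    ∃ t' ∈ Ioo a b, ∃ q ∈ Ioo a b, q ≠ t' ∧ discDefect c θ (κ t') t' (c q) = 0 ∧
      |q - t'| < ε := by
  obtain ⟨q, hq, hqt, hq₀⟩ := (hκ.exists_contact t ht).resolve_left hpos.ne'
  have hsmall (n : ℕ) : ∃ t' ∈ Ioo a b, ∃ q' ∈ Ioo a b, q' ≠ t' ∧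
      IsContactChord a b c θ (κ t') t' t' q' ∧ |q' - t'| ≤ |q - t| / 2 ^ n := by
    induction n with
    | zero => exact ⟨t, ht, q, hq, hqt, hκ.isContactChord ht hpos hq₀, by simp⟩
    | succ n ih =>
      obtain ⟨t₁, ht₁, q₁, hq₁, hne₁, hchord, hlen⟩ := ih
      obtain ⟨t₂, ht₂, q₂, hq₂, hne₂, hchord', hhalf⟩ :=
        hκ.exists_isContactChord_half H ht₁ hq₁ hne₁ hchord
      refine ⟨t₂, ht₂, q₂, hq₂, hne₂, hchord', hhalf.trans ?_⟩
      rw [pow_succ, ← div_div]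
      gcongr
  obtain ⟨n, hn⟩ := pow_unbounded_of_one_lt (|q - t| / ε) one_lt_two
  obtain ⟨t', ht', q', hq', hne, hchord, hle⟩ := hsmall n
  exact ⟨t', ht', q', hq', hne, hchord.right_eq_zero, hle.trans_lt (div_lt_comm₀ hε (by positivity)
    |>.mp hn)⟩

end IsTouchingFamily

end

/-! ### Curves on the sphere and their frames -/

theorem dot3_eq_dotProduct (u v : R3) : dot3 u v = u ⬝ᵥ v := (vec3_dotProduct u v).symm

theorem cross3_eq_crossProduct (u v : R3) : cross3 u v = u ⨯₃ v := (cross_apply u v).symm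

theorem det3_eq_det (u v w : R3) : det3 u v w = Matrix.det ![u, v, w] := by
  rw [det3, dot3_eq_dotProduct, cross3_eq_crossProduct, triple_product_eq_det]

section

variable (u v w : R3) (r : ℝ)

theorem dot3_comm : dot3 u v = dot3 v u := by
  simp only [dot3_eq_dotProduct, dotProduct_comm]

theorem dot3_add_left : dot3 (u + v) w = dot3 u w + dot3 v w := by
  simp only [dot3_eq_dotProduct, add_dotProduct]

theorem dot3_add_right : dot3 u (v + w) = dot3 u v + dot3 u w := by
  simp only [dot3_eq_dotProduct, dotProduct_add]

theorem dot3_smul_left : dot3 (r • u) v = r * dot3 u v := by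
  simp only [dot3_eq_dotProduct, smul_dotProduct, smul_eq_mul]

theorem dot3_smul_right : dot3 u (r • v) = r * dot3 u v := by
  simp only [dot3_eq_dotProduct, dotProduct_smul, smul_eq_mul]

theorem dot3_cross3_self_left : dot3 u (cross3 u v) = 0 := by
  rw [dot3_eq_dotProduct, cross3_eq_crossProduct, dot_self_cross]

theorem dot3_cross3_self_right : dot3 v (cross3 u v) = 0 := by
  rw [dot3_eq_dotProduct, cross3_eq_crossProduct, dot_cross_self]

theorem dot3_cross3_cross3 :
    dot3 (cross3 u v) (cross3 u v) = dot3 u u * dot3 v v - dot3 u v ^ 2 := by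
  simp only [dot3_eq_dotProduct, cross3_eq_crossProduct, cross_dot_cross]
  rw [dotProduct_comm v u, sq]

end

theorem dot3_self_pos {v : R3} (hv : v ≠ 0) : 0 < dot3 v v := by
  rw [dot3_eq_dotProduct]
  exact (dotProduct_self_star_nonneg v).lt_of_ne' (dotProduct_self_eq_zero.not.mpr hv)

theorem dot3_self_nonneg (v : R3) : 0 ≤ dot3 v v := by
  rw [dot3_eq_dotProduct]
  exact dotProduct_self_star_nonneg v

theorem norm3_pos {v : R3} (hv : v ≠ 0) : 0 < norm3 v := Real.sqrt_pos.mpr (dot3_self_pos hv)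

theorem norm3_nonneg (v : R3) : 0 ≤ norm3 v := Real.sqrt_nonneg _

theorem norm3_sq (v : R3) : norm3 v ^ 2 = dot3 v v := Real.sq_sqrt (dot3_self_nonneg v)

theorem dot3_sub_sub_self {x y : R3} (hx : dot3 x x = 1) (hy : dot3 y y = 1) :
    dot3 (x - y) (x - y) = 2 * (1 - dot3 x y) := by
  simp only [dot3, Pi.sub_apply] at *
  linear_combination hx + hy

theorem dot3_lt_one_of_ne {x y : R3} (hx : dot3 x x = 1) (hy : dot3 y y = 1) (h : x ≠ y) :
    dot3 x y < 1 := by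
  linarith [dot3_sub_sub_self hx hy, dot3_self_pos (sub_ne_zero.mpr h)]

@[fun_prop]
theorem continuous_dot3 : Continuous fun p : R3 × R3 ↦ dot3 p.1 p.2 := by
  unfold dot3
  fun_prop

theorem hasDerivAt_dot3 {f g : ℝ → R3} {f' g' : R3} {s : ℝ} (hf : HasDerivAt f f' s)
    (hg : HasDerivAt g g' s) :
    HasDerivAt (fun t ↦ dot3 (f t) (g t)) (dot3 f' (g s) + dot3 (f s) g') s := by
  simp only [dot3_eq_dotProduct, dotProduct, ← Finset.sum_add_distrib]
  rw [hasDerivAt_pi] at hf hg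
  exact .fun_sum fun i _ ↦ (hf i).fun_mul (hg i)

theorem hasDerivAt_dot3_const {f : ℝ → R3} {f' : R3} {s : ℝ} (hf : HasDerivAt f f' s) (w : R3) :
    HasDerivAt (fun t ↦ dot3 (f t) w) (dot3 f' w) s :=
  (hasDerivAt_dot3 hf (hasDerivAt_const s w)).congr_deriv (by simp [dot3])

namespace IsRegularCurve

variable {γ : ℝ → R3}

theorem hasDerivAt (hγ : IsRegularCurve γ) (s : ℝ) : HasDerivAt γ (deriv γ s) s :=
  (hγ.smooth.differentiable (by simp) s).hasDerivAt

theorem dot3_deriv (hγ : IsRegularCurve γ) (s : ℝ) : dot3 (γ s) (deriv γ s) = 0 := by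
  have h := hasDerivAt_dot3 (hγ.hasDerivAt s) (hγ.hasDerivAt s)
  have hconst : (fun t ↦ dot3 (γ t) (γ t)) = fun _ ↦ 1 := funext hγ.sphere
  rw [hconst] at h
  have := h.unique (hasDerivAt_const s 1)
  rw [dot3_comm (deriv γ s)] at this
  linarith

theorem dot3_unitNormal_self (hγ : IsRegularCurve γ) (s : ℝ) :
    dot3 (unitNormal γ s) (unitNormal γ s) = 1 := by
  have := (norm3_pos (hγ.reg s)).ne'
  rw [unitNormal, dot3_smul_left, dot3_smul_right, dot3_cross3_cross3, hγ.sphere, hγ.dot3_deriv,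
    ← norm3_sq]
  field_simp
  ring

end IsRegularCurve

theorem dot3_unitNormal (γ : ℝ → R3) (s : ℝ) : dot3 (γ s) (unitNormal γ s) = 0 := by
  rw [unitNormal, dot3_smul_right, dot3_cross3_self_left, mul_zero]

theorem dot3_deriv_unitNormal (γ : ℝ → R3) (s : ℝ) : dot3 (deriv γ s) (unitNormal γ s) = 0 := by
  rw [unitNormal, dot3_smul_right, dot3_cross3_self_right, mul_zero]

theorem norm3_mul_dot3_unitNormal {γ : ℝ → R3} (hγ : IsRegularCurve γ) (s : ℝ) (x : R3) :
    norm3 (deriv γ s) * dot3 x (unitNormal γ s) = det3 x (γ s) (deriv γ s) := by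
  rw [unitNormal, dot3_smul_right, mul_inv_cancel_left₀ (norm3_pos (hγ.reg s)).ne', det3]

/-- The rotation to the coordinates of the moving frame `γ'/|γ'|, n, γ` at `s`. -/
def frame (γ : ℝ → R3) (s : ℝ) : Matrix (Fin 3) (Fin 3) ℝ :=
  ![(norm3 (deriv γ s))⁻¹ • deriv γ s, unitNormal γ s, γ s]

namespace IsRegularCurve

variable {γ : ℝ → R3}

theorem frame_mul_transpose (hγ : IsRegularCurve γ) (s : ℝ) :
    frame γ s * (frame γ s)ᵀ = 1 := by
  have hv := (norm3_pos (hγ.reg s)).ne'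
  have hvv : dot3 (deriv γ s) (deriv γ s) = norm3 (deriv γ s) ^ 2 := (norm3_sq _).symm
  ext i j
  change dotProduct (frame γ s i) (frame γ s j) = _
  rw [← dot3_eq_dotProduct]
  fin_cases i <;> fin_cases j <;>
    simp [frame, dot3_smul_left, dot3_smul_right, hvv, hγ.sphere, hγ.dot3_unitNormal_self,
      dot3_unitNormal, dot3_deriv_unitNormal, hγ.dot3_deriv, dot3_comm (unitNormal γ s),
      dot3_comm (deriv γ s) (γ s), sq, hv]

theorem det_frame (hγ : IsRegularCurve γ) (s : ℝ) : (frame γ s).det = 1 := by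
  have hcross : γ s ⨯₃ ((norm3 (deriv γ s))⁻¹ • deriv γ s) = unitNormal γ s := by
    rw [map_smul, ← cross3_eq_crossProduct, unitNormal]
  rw [frame, ← triple_product_eq_det, triple_product_permutation, hcross, ← dot3_eq_dotProduct,
    hγ.dot3_unitNormal_self]

end IsRegularCurve

theorem dot3_mulVec {M : Matrix (Fin 3) (Fin 3) ℝ} (hM : M * Mᵀ = 1) (x y : R3) :
    dot3 (M *ᵥ x) (M *ᵥ y) = dot3 x y := by
  rw [dot3_eq_dotProduct, dot3_eq_dotProduct, dotProduct_mulVec, vecMul_mulVec,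
    mul_eq_one_comm.mp hM, vecMul_one]

theorem det3_mulVec (M : Matrix (Fin 3) (Fin 3) ℝ) (x y z : R3) :
    det3 (M *ᵥ x) (M *ᵥ y) (M *ᵥ z) = M.det * det3 x y z := by
  have hrows : ![M *ᵥ x, M *ᵥ y, M *ᵥ z] = (of ![x, y, z] : Matrix (Fin 3) (Fin 3) ℝ) * Mᵀ := by
    ext i j
    fin_cases i <;> simp [mul_apply, mulVec, dotProduct, mul_comm]
  rw [det3_eq_det, det3_eq_det, hrows, det_mul, det_transpose, mul_comm]
  rfl

theorem deriv_mulVec (M : Matrix (Fin 3) (Fin 3) ℝ) {γ : ℝ → R3} {s : ℝ}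
    (h : DifferentiableAt ℝ γ s) : deriv (fun t ↦ M *ᵥ γ t) s = M *ᵥ deriv γ s :=
  ((toLin' M).toContinuousLinearMap.hasFDerivAt.comp_hasDerivAt s h.hasDerivAt).deriv

theorem IsRegularCurve.mulVec {M : Matrix (Fin 3) (Fin 3) ℝ} (hM : M * Mᵀ = 1) {γ : ℝ → R3}
    (hγ : IsRegularCurve γ) : IsRegularCurve fun s ↦ M *ᵥ γ s where
  smooth := (toLin' M).toContinuousLinearMap.contDiff.comp hγ.smooth
  sphere s := by rw [dot3_mulVec hM, hγ.sphere]
  reg s h := by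
    rw [deriv_mulVec M (hγ.hasDerivAt s).differentiableAt] at h
    have := dot3_mulVec hM (deriv γ s) (deriv γ s)
    exact (dot3_self_pos (hγ.reg s)).ne (by simpa [h, dot3] using this)

/-! ### Stereographic projection -/

/-- Up to the factor `√(1 + ν²)`, the signed amount by which `x` fails to lie in the open cap whose
boundary has geodesic curvature `ν` and is tangent to `γ` on its left at `t`. -/
def capDefect (γ : ℝ → R3) (ν t : ℝ) (x : R3) : ℝ :=
  ν - dot3 x (ν • γ t + unitNormal γ t)

theorem IsRegularCurve.norm3_mul_capDefect {γ : ℝ → R3} (hγ : IsRegularCurve γ) (ν t : ℝ)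
    (x : R3) : norm3 (deriv γ t) * capDefect γ ν t x =
      ν * norm3 (deriv γ t) * (1 - dot3 x (γ t)) - det3 x (γ t) (deriv γ t) := by
  rw [capDefect, dot3_add_right, dot3_smul_right, ← norm3_mul_dot3_unitNormal hγ]
  ring

theorem exists_continuous_slope {E : Type*} [NormedAddCommGroup E] [NormedSpace ℝ E]
    [CompleteSpace E] {f : ℝ → E} (hf : ContDiff ℝ 1 f) :
    ∃ S : ℝ → ℝ → E, Continuous (fun p : ℝ × ℝ ↦ S p.1 p.2) ∧ (∀ s, S s s = deriv f s) ∧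
      ∀ s t, (t - s) • S s t = f t - f s := by
  have : Continuous (deriv f) := hf.continuous_deriv le_rfl
  refine ⟨fun s t ↦ ∫ k in (0 : ℝ)..1, deriv f (s + k * (t - s)), ?_, fun s ↦ by simp, ?_⟩
  · exact intervalIntegral.continuous_parametric_intervalIntegral_of_continuous'
      (f := fun (p : ℝ × ℝ) k ↦ deriv f (p.1 + k * (p.2 - p.1))) (by fun_prop) 0 1
  · intro s t
    have hderiv (k : ℝ) : HasDerivAt (fun k ↦ f (s + k * (t - s)))
        ((t - s) • deriv f (s + k * (t - s))) k := by
      have hline : HasDerivAt (fun k : ℝ ↦ s + k * (t - s)) (t - s) k := by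
        simpa using ((hasDerivAt_id k).mul_const (t - s)).const_add s
      exact (hf.differentiable one_ne_zero _).hasDerivAt.scomp k hline
    have := intervalIntegral.integral_eq_sub_of_hasDerivAt (fun k _ ↦ hderiv k)
      (Continuous.intervalIntegrable (by fun_prop) 0 1)
    rw [intervalIntegral.integral_smul] at this
    simpa using this

theorem exists_continuousOn_arg {E : Type*} [NormedAddCommGroup E] [NormedSpace ℝ E] {U : Set E}
    (hU : IsOpen U) (hconv : Convex ℝ U) (hne : U.Nonempty) {W : E → ℂ} (hW : ContinuousOn W U)
    (h0 : ∀ p ∈ U, W p ≠ 0) :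
    ∃ θ : E → ℝ, ContinuousOn θ U ∧ ∀ p ∈ U, W p = ‖W p‖ * exp (θ p * I) := by
  have := hconv.contractibleSpace hne
  obtain ⟨L, hLc, hL⟩ := Complex.exists_continuousOn_eqOn_exp_comp
    (SimplyConnectedSpace.ofContractible U) hU hW fun ⟨p, hp, hp0⟩ ↦ h0 p hp hp0
  refine ⟨fun p ↦ (L p).im, Complex.continuous_im.comp_continuousOn hLc, fun p hp ↦ ?_⟩
  rw [← hL hp, Function.comp_apply, Complex.norm_exp, Complex.ofReal_exp, ← Complex.exp_add,
    Complex.re_add_im]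

/-- The stereographic projection from `(0, 0, 1)`, composed with a reflection so as to preserve the
orientation of the sphere given by the outer normal. -/
def stereo (p : R3) : ℂ := ⟨p 0 / (1 - p 2), -(p 1 / (1 - p 2))⟩

/-- The derivative of `stereo` at `p` in the direction `v`, multiplied by `(1 - p 2) ^ 2`. -/
def stereoVelocity (p v : R3) : ℂ :=
  ⟨v 0 * (1 - p 2) + p 0 * v 2, -(v 1 * (1 - p 2) + p 1 * v 2)⟩

@[fun_prop]
theorem continuous_stereoVelocity : Continuous fun x : R3 × R3 ↦ stereoVelocity x.1 x.2 := by
  simp only [stereoVelocity, Complex.mk_eq_add_mul_I]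
  fun_prop

theorem continuousAt_stereo {p : R3} (hp : p 2 ≠ 1) : ContinuousAt stereo p := by
  have : 1 - p 2 ≠ 0 := sub_ne_zero.mpr hp.symm
  unfold stereo
  simp only [Complex.mk_eq_add_mul_I]
  fun_prop (disch := assumption)

section

variable {p q v : R3}

theorem stereoVelocity_smul (p v : R3) (r : ℝ) :
    stereoVelocity p (r • v) = r * stereoVelocity p v := by
  apply Complex.ext <;> simp [stereoVelocity] <;> ring

theorem stereo_sub_stereo (hp : p 2 < 1) (hq : q 2 < 1) :
    stereo q - stereo p = ((1 - p 2) * (1 - q 2))⁻¹ • stereoVelocity p (q - p) := by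
  have hp' : 1 - p 2 ≠ 0 := (sub_pos.mpr hp).ne'
  have hq' : 1 - q 2 ≠ 0 := (sub_pos.mpr hq).ne'
  apply Complex.ext <;>
    simp only [stereo, stereoVelocity, Pi.sub_apply, Complex.sub_re, Complex.sub_im,
      Complex.smul_re, Complex.smul_im, smul_eq_mul] <;>
    field_simp <;> ring

theorem norm_stereoVelocity (hp : dot3 p p = 1) (hpv : dot3 p v = 0) (hp1 : p 2 < 1) :
    ‖stereoVelocity p v‖ = (1 - p 2) * norm3 v := by
  rw [← sq_eq_sq₀ (norm_nonneg _) (mul_nonneg (sub_pos.mpr hp1).le (norm3_nonneg v)), mul_pow,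
    norm3_sq, Complex.sq_norm, Complex.normSq_apply]
  simp only [dot3, stereoVelocity] at hp hpv ⊢
  linear_combination 2 * (1 - p 2) * v 2 * hpv + v 2 ^ 2 * hp

theorem sq_norm_stereo (hp : dot3 p p = 1) (hp1 : p 2 < 1) :
    ‖stereo p‖ ^ 2 = (1 + p 2) / (1 - p 2) := by
  have : 1 - p 2 ≠ 0 := (sub_pos.mpr hp1).ne'
  simp only [Complex.sq_norm, Complex.normSq_apply, stereo, dot3] at hp ⊢
  field_simp
  linear_combination hp

theorem sq_norm_stereo_sub_stereo (hp : dot3 p p = 1) (hq : dot3 q q = 1) (hp1 : p 2 < 1)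
    (hq1 : q 2 < 1) :
    ‖stereo q - stereo p‖ ^ 2 = 2 * (1 - dot3 q p) / ((1 - p 2) * (1 - q 2)) := by
  have hp' : 1 - p 2 ≠ 0 := (sub_pos.mpr hp1).ne'
  have hq' : 1 - q 2 ≠ 0 := (sub_pos.mpr hq1).ne'
  simp only [Complex.sq_norm, Complex.normSq_apply, Complex.sub_re, Complex.sub_im, stereo,
    dot3] at hp hq ⊢
  field_simp
  linear_combination (1 - p 2) ^ 2 * hq + (1 - q 2) ^ 2 * hp

theorem stereo_sub_stereo_ne_zero (hp : dot3 p p = 1) (hq : dot3 q q = 1) (hp1 : p 2 < 1)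
    (hq1 : q 2 < 1) (hpq : q ≠ p) : stereo q - stereo p ≠ 0 := by
  have := sub_pos.mpr (dot3_lt_one_of_ne hq hp hpq)
  have := sub_pos.mpr hp1
  have := sub_pos.mpr hq1
  refine norm_ne_zero_iff.mp (pow_ne_zero_iff two_ne_zero |>.mp ?_)
  rw [sq_norm_stereo_sub_stereo hp hq hp1 hq1]
  positivity

theorem im_stereo_sub_mul_conj (hp : dot3 p p = 1) (hpv : dot3 p v = 0) (hp1 : p 2 < 1)
    (hq1 : q 2 < 1) :
    ((stereo q - stereo p) * conj (stereoVelocity p v)).im =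
      (det3 q p v * (1 - p 2) - (1 - dot3 q p) * (p 0 * v 1 - p 1 * v 0)) / (1 - q 2) := by
  have hp' : 1 - p 2 ≠ 0 := (sub_pos.mpr hp1).ne'
  have hq' : 1 - q 2 ≠ 0 := (sub_pos.mpr hq1).ne'
  simp only [Complex.mul_im, Complex.conj_re, Complex.conj_im, Complex.sub_re, Complex.sub_im,
    stereo, stereoVelocity, det3, cross3, dot3, cons_val_zero, cons_val_one, cons_val] at hp hpv ⊢
  field_simp
  linear_combination q 0 * (1 - p 2) * (p 1 * hpv - v 1 * hp)
    + q 1 * (1 - p 2) * (v 0 * hp - p 0 * hpv)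

end

theorem apply_two_lt_one {p : R3} (hp : dot3 p p = 1) (hne : p ≠ ![0, 0, 1]) : p 2 < 1 := by
  simpa [dot3] using dot3_lt_one_of_ne hp (y := ![0, 0, 1]) (by simp [dot3]) hne

theorem tendsto_norm_stereo {l : Filter ℝ} {γ : ℝ → R3} (hγ : ∀ s, dot3 (γ s) (γ s) = 1)
    (hlim : Tendsto γ l (𝓝 ![0, 0, 1])) (hne : ∀ᶠ s in l, γ s 2 < 1) :
    Tendsto (fun s ↦ ‖stereo (γ s)‖) l atTop := by
  have hz : Tendsto (fun s ↦ γ s 2) l (𝓝 1) := by simpa using (hlim.apply_nhds 2)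
  have hden : Tendsto (fun s ↦ 1 - γ s 2) l (𝓝[>] 0) :=
    tendsto_nhdsWithin_iff.mpr ⟨by simpa using hz.const_sub 1, hne.mono fun s hs ↦ sub_pos.mpr hs⟩
  have hsq : Tendsto (fun s ↦ (1 + γ s 2) / (1 - γ s 2)) l atTop :=
    (hz.const_add 1).pos_mul_atTop (by norm_num) hden.inv_tendsto_nhdsGT_zero
  refine (Real.tendsto_sqrt_atTop.comp hsq).congr' (hne.mono fun s hs ↦ ?_)
  rw [Function.comp_apply, ← sq_norm_stereo (hγ s) hs, Real.sqrt_sq (norm_nonneg _)]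

theorem norm_mul_tangentHeight {c : ℝ → ℂ} {θ : ℝ → ℝ → ℝ} {t : ℝ} {w : ℂ}
    (hθ : w = ‖w‖ * exp (θ t t * I)) (z : ℂ) :
    ‖w‖ * tangentHeight c θ t z = ((z - c t) * conj w).im := by
  have hconj : conj w = ‖w‖ * exp (-(θ t t * I)) := by
    rw [hθ, map_mul, ← Complex.exp_conj, map_mul, Complex.conj_ofReal, Complex.conj_ofReal,
      Complex.conj_I, mul_neg, ← hθ]
  rw [tangentHeight, hconj, mul_left_comm, Complex.im_ofReal_mul]

theorem discDefect_stereo {γ : ℝ → R3} (hγ : IsRegularCurve γ) {θ : ℝ → ℝ → ℝ} {t : ℝ}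
    (ht : γ t 2 < 1) (hθ : stereoVelocity (γ t) (deriv γ t) =
      ‖stereoVelocity (γ t) (deriv γ t)‖ * exp (θ t t * I))
    {q : R3} (hq : dot3 q q = 1) (hq1 : q 2 < 1) (ν : ℝ) :
    discDefect (stereo ∘ γ) θ (capDefect γ ν t ![0, 0, 1] / 2) t (stereo q) =
      capDefect γ ν t q / (1 - q 2) := by
  have hp' : 1 - γ t 2 ≠ 0 := (sub_pos.mpr ht).ne'
  have hq' : 1 - q 2 ≠ 0 := (sub_pos.mpr hq1).ne'
  have hv := (norm3_pos (hγ.reg t)).ne'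
  have hheight := norm_mul_tangentHeight (c := stereo ∘ γ) hθ (stereo q)
  rw [Function.comp_apply, im_stereo_sub_mul_conj (hγ.sphere t) (hγ.dot3_deriv t) ht hq1,
    norm_stereoVelocity (hγ.sphere t) (hγ.dot3_deriv t) ht] at hheight
  have hpole := hγ.norm3_mul_capDefect ν t ![0, 0, 1]
  have hdot : dot3 ![0, 0, 1] (γ t) = γ t 2 := by simp [dot3]
  have hdet : det3 ![0, 0, 1] (γ t) (deriv γ t) =
      γ t 0 * deriv γ t 1 - γ t 1 * deriv γ t 0 := by simp [det3, dot3, cross3]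
  rw [hdot, hdet] at hpole
  refine mul_left_cancel₀ (mul_ne_zero hp' hv) ?_
  rw [discDefect, mul_sub, hheight, Function.comp_apply,
    sq_norm_stereo_sub_stereo (hγ.sphere t) hq ht hq1]
  field_simp
  linear_combination (1 - dot3 q (γ t)) * hpole - (1 - γ t 2) * hγ.norm3_mul_capDefect ν t q

namespace IsRegularCurve

variable {a b : ℝ} {γ : ℝ → R3}

theorem exists_continuous_stereo_slope (hγ : IsRegularCurve γ) :
    ∃ W : ℝ × ℝ → ℂ, Continuous W ∧ (∀ t, W (t, t) = stereoVelocity (γ t) (deriv γ t)) ∧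
      ∀ s t, γ s 2 < 1 → γ t 2 < 1 →
        stereo (γ t) - stereo (γ s) = ((t - s) / ((1 - γ s 2) * (1 - γ t 2))) • W (s, t) := by
  have hcont : Continuous γ := hγ.smooth.continuous
  obtain ⟨S, hSc, hSdiag, hS⟩ := exists_continuous_slope (hγ.smooth.of_le (by simp))
  refine ⟨fun p ↦ stereoVelocity (γ p.1) (S p.1 p.2), by fun_prop, fun t ↦ by simp only [hSdiag],
    fun s t hs ht ↦ ?_⟩
  rw [stereo_sub_stereo hs ht, ← hS, stereoVelocity_smul, ← Complex.real_smul, smul_smul,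
    div_eq_inv_mul]

theorem exists_isChordAngle_stereo (hγ : IsRegularCurve γ)
    (hab : a < b) (hinj : InjOn γ (Ico a b)) (ha : γ a = ![0, 0, 1]) (hb : γ b = ![0, 0, 1]) :
    ∃ θ : ℝ → ℝ → ℝ, IsChordAngle a b (stereo ∘ γ) θ ∧ ∀ t ∈ Ioo a b,
      stereoVelocity (γ t) (deriv γ t) =
        ‖stereoVelocity (γ t) (deriv γ t)‖ * exp (θ t t * I) := by
  have hlt (t : ℝ) (ht : t ∈ Ioo a b) : γ t 2 < 1 := apply_two_lt_one (hγ.sphere t) <|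
    ha ▸ hinj.ne (Ioo_subset_Ico_self ht) (left_mem_Ico.mpr hab) ht.1.ne'
  have hcont : Continuous γ := hγ.smooth.continuous
  obtain ⟨W, hWc, hWdiag, hW⟩ := hγ.exists_continuous_stereo_slope
  have hW0 : ∀ p ∈ Ioo a b ×ˢ Ioo a b, W p ≠ 0 := by
    rintro ⟨s, t⟩ ⟨hs, ht⟩ h0
    rcases eq_or_ne s t with rfl | hst
    · have := norm_stereoVelocity (hγ.sphere s) (hγ.dot3_deriv s) (hlt s hs)
      rw [← hWdiag, h0, norm_zero] at this
      exact (mul_pos (sub_pos.mpr (hlt s hs)) (norm3_pos (hγ.reg s))).ne this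
    · have := hW s t (hlt s hs) (hlt t ht)
      rw [h0, smul_zero] at this
      exact stereo_sub_stereo_ne_zero (hγ.sphere s) (hγ.sphere t) (hlt s hs) (hlt t ht)
        (hinj.ne (Ioo_subset_Ico_self ht) (Ioo_subset_Ico_self hs) hst.symm) this
  obtain ⟨θ, hθc, hθ⟩ := exists_continuousOn_arg (isOpen_Ioo.prod isOpen_Ioo)
    ((convex_Ioo a b).prod (convex_Ioo a b)) ((nonempty_Ioo.mpr hab).prod (nonempty_Ioo.mpr hab))
    hWc.continuousOn hW0
  refine ⟨fun s t ↦ θ (s, t), ⟨?_, hθc, ?_, ?_, ?_⟩, fun t ht ↦ ?_⟩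
  · exact fun t ht ↦ ((continuousAt_stereo (hlt t ht).ne).comp
      hcont.continuousAt).continuousWithinAt
  · intro s hs t ht hst
    refine ⟨(t - s) / ((1 - γ s 2) * (1 - γ t 2)) * ‖W (s, t)‖, mul_pos (div_pos (sub_pos.mpr hst)
      (mul_pos (sub_pos.mpr (hlt s hs)) (sub_pos.mpr (hlt t ht))))
      (norm_pos_iff.mpr (hW0 (s, t) ⟨hs, ht⟩)), ?_⟩
    rw [Complex.ofReal_mul, mul_assoc, ← hθ (s, t) ⟨hs, ht⟩, ← Complex.real_smul]
    exact hW s t (hlt s hs) (hlt t ht)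
  · refine tendsto_norm_stereo hγ.sphere (ha ▸ hcont.continuousWithinAt) ?_
    filter_upwards [Ioo_mem_nhdsGT hab] using hlt
  · refine tendsto_norm_stereo hγ.sphere (hb ▸ hcont.continuousWithinAt) ?_
    filter_upwards [Ioo_mem_nhdsLT hab] using hlt
  · rw [← hWdiag]
    exact hθ (t, t) ⟨ht, ht⟩

theorem capDefect_mulVec (hγ : IsRegularCurve γ) {M : Matrix (Fin 3) (Fin 3) ℝ} (hM : M * Mᵀ = 1)
    (hdet : M.det = 1) (ν t : ℝ) (x : R3) :
    capDefect (fun s ↦ M *ᵥ γ s) ν t (M *ᵥ x) = capDefect γ ν t x := by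
  have hv : norm3 (M *ᵥ deriv γ t) = norm3 (deriv γ t) := by rw [norm3, dot3_mulVec hM, norm3]
  have h := (hγ.mulVec hM).norm3_mul_capDefect ν t (M *ᵥ x)
  rw [deriv_mulVec M (hγ.hasDerivAt t).differentiableAt, hv, dot3_mulVec hM, det3_mulVec, hdet,
    one_mul, ← hγ.norm3_mul_capDefect] at h
  exact mul_left_cancel₀ (norm3_pos (hγ.reg t)).ne' h

theorem frame_mulVec_self (hγ : IsRegularCurve γ) (s : ℝ) : frame γ s *ᵥ γ s = ![0, 0, 1] := by
  ext i
  change dotProduct (frame γ s i) (γ s) = _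
  rw [← dot3_eq_dotProduct, dot3_comm]
  fin_cases i <;>
    simp [frame, dot3_smul_right, hγ.dot3_deriv, dot3_unitNormal, hγ.sphere]

theorem exists_isChordAngle (hγ : IsRegularCurve γ) (hab : a < b) (hinj : InjOn γ (Ico a b))
    (hclosed : γ a = γ b) :
    ∃ (c : ℝ → ℂ) (θ : ℝ → ℝ → ℝ), IsChordAngle a b c θ ∧ ∀ t ∈ Ioo a b, ∀ s ∈ Ioo a b, ∀ ν : ℝ,
      discDefect c θ (capDefect γ ν t (γ a) / 2) t (c s) =
        capDefect γ ν t (γ s) / (1 - dot3 (γ s) (γ a)) := by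
  set M := frame γ a
  have hM : M * Mᵀ = 1 := hγ.frame_mul_transpose a
  have hpole : M *ᵥ γ a = ![0, 0, 1] := hγ.frame_mulVec_self a
  have hβ := hγ.mulVec hM
  have hinjβ : InjOn (fun s ↦ M *ᵥ γ s) (Ico a b) := fun s hs t ht h ↦
    hinj hs ht (mulVec_injective_of_isUnit (.of_mul_eq_one _ hM) h)
  obtain ⟨θ, H, hθ⟩ := hβ.exists_isChordAngle_stereo hab hinjβ hpole (by rw [← hclosed, hpole])
  have hlt (t : ℝ) (ht : t ∈ Ioo a b) : (M *ᵥ γ t) 2 < 1 := apply_two_lt_one (hβ.sphere t) <|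
    hpole ▸ hinjβ.ne (Ioo_subset_Ico_self ht) (left_mem_Ico.mpr hab) ht.1.ne'
  refine ⟨_, θ, H, fun t ht s hs ν ↦ ?_⟩
  have := discDefect_stereo hβ (hlt t ht) (hθ t ht) (hβ.sphere s) (hlt s hs) ν
  rw [← hpole, hγ.capDefect_mulVec hM (hγ.det_frame a), hγ.capDefect_mulVec hM (hγ.det_frame a)]
    at this
  rw [← dot3_mulVec hM, hpole]
  simpa [dot3] using this

end IsRegularCurve

/-! ### Contact of a curve with its tangent caps -/

theorem det3_rotate (u v w : R3) : det3 u v w = det3 v w u := by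
  rw [det3, det3, dot3_eq_dotProduct, dot3_eq_dotProduct, cross3_eq_crossProduct,
    cross3_eq_crossProduct, triple_product_permutation]

theorem continuous_unitNormal {γ : ℝ → R3} (hγ : IsRegularCurve γ) :
    Continuous (unitNormal γ) := by
  have hcont : Continuous γ := hγ.smooth.continuous
  have hderiv : Continuous (deriv γ) := hγ.smooth.continuous_deriv (by simp)
  have hnorm : Continuous fun s ↦ norm3 (deriv γ s) := by unfold norm3; fun_prop
  refine (hnorm.inv₀ fun s ↦ (norm3_pos (hγ.reg s)).ne').smul ?_
  simp only [cross3_eq_crossProduct, cross_apply]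
  fun_prop

namespace IsRegularCurve

variable {γ : ℝ → R3}

theorem hasDerivAt_deriv (hγ : IsRegularCurve γ) (s : ℝ) :
    HasDerivAt (deriv γ) (deriv (deriv γ) s) s :=
  ((contDiff_infty_iff_deriv.mp hγ.smooth).2.differentiable (by simp) s).hasDerivAt

theorem dot3_deriv_deriv (hγ : IsRegularCurve γ) (s : ℝ) :
    dot3 (deriv (deriv γ) s) (γ s) = -norm3 (deriv γ s) ^ 2 := by
  have h := hasDerivAt_dot3 (hγ.hasDerivAt s) (hγ.hasDerivAt_deriv s)
  rw [funext hγ.dot3_deriv] at h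
  have := h.unique (hasDerivAt_const s 0)
  rw [norm3_sq, dot3_comm]
  linarith

theorem dot3_deriv_deriv_unitNormal (hγ : IsRegularCurve γ) (s : ℝ) :
    dot3 (deriv (deriv γ) s) (unitNormal γ s) = kappa γ s * norm3 (deriv γ s) ^ 2 := by
  have hv := (norm3_pos (hγ.reg s)).ne'
  have h := norm3_mul_dot3_unitNormal hγ s (deriv (deriv γ) s)
  rw [det3_rotate] at h
  rw [kappa, ← h]
  field_simp

end IsRegularCurve

theorem capDefect_eq (γ : ℝ → R3) (ν t : ℝ) (x : R3) :
    capDefect γ ν t x = ν * (1 - dot3 x (γ t)) - dot3 x (unitNormal γ t) := by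
  rw [capDefect, dot3_add_right, dot3_smul_right]
  ring

namespace IsRegularCurve

variable {γ : ℝ → R3} {ν t : ℝ}

theorem capDefect_self (hγ : IsRegularCurve γ) (ν t : ℝ) : capDefect γ ν t (γ t) = 0 := by
  rw [capDefect_eq, hγ.sphere, dot3_unitNormal]
  ring

theorem capDefect_mono (hγ : IsRegularCurve γ) {x : R3} (hx : dot3 x x = 1) (t : ℝ) :
    Monotone fun ν ↦ capDefect γ ν t x := by
  intro μ ν hμν
  have h := dot3_self_nonneg (x - γ t)
  rw [dot3_sub_sub_self hx (hγ.sphere t)] at h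
  simp only [capDefect_eq]
  nlinarith

theorem continuous_capDefect (hγ : IsRegularCurve γ) (ν : ℝ) :
    Continuous fun p : ℝ × ℝ ↦ capDefect γ ν p.1 (γ p.2) := by
  have hcont : Continuous γ := hγ.smooth.continuous
  have hn := continuous_unitNormal hγ
  unfold capDefect
  fun_prop

theorem hasDerivAt_capDefect (hγ : IsRegularCurve γ) (ν t s : ℝ) :
    HasDerivAt (fun u ↦ capDefect γ ν t (γ u))
      (-dot3 (deriv γ s) (ν • γ t + unitNormal γ t)) s :=
  (hasDerivAt_dot3_const (hγ.hasDerivAt s) _).const_sub ν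

theorem hasDerivAt_deriv_capDefect (hγ : IsRegularCurve γ) (ν t s : ℝ) :
    HasDerivAt (deriv fun u ↦ capDefect γ ν t (γ u))
      (-dot3 (deriv (deriv γ) s) (ν • γ t + unitNormal γ t)) s := by
  rw [funext fun u ↦ (hγ.hasDerivAt_capDefect ν t u).deriv]
  exact (hasDerivAt_dot3_const (hγ.hasDerivAt_deriv s) _).fun_neg

theorem deriv_capDefect_self (hγ : IsRegularCurve γ) (ν t : ℝ) :
    deriv (fun u ↦ capDefect γ ν t (γ u)) t = 0 := by
  rw [(hγ.hasDerivAt_capDefect ν t t).deriv, dot3_add_right, dot3_smul_right,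
    dot3_deriv_unitNormal, dot3_comm, hγ.dot3_deriv]
  ring

theorem deriv_deriv_capDefect_self (hγ : IsRegularCurve γ) (ν t : ℝ) :
    deriv (deriv fun u ↦ capDefect γ ν t (γ u)) t =
      (ν - kappa γ t) * norm3 (deriv γ t) ^ 2 := by
  rw [(hγ.hasDerivAt_deriv_capDefect ν t t).deriv, dot3_add_right, dot3_smul_right,
    hγ.dot3_deriv_deriv, hγ.dot3_deriv_deriv_unitNormal]
  ring

end IsRegularCurve

theorem lt_of_deriv2_pos {f : ℝ → ℝ} {D : Set ℝ} (hD : Convex ℝ D) (hf : ContinuousOn f D)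
    (hf'' : ∀ x ∈ D, 0 < deriv (deriv f) x) {t s : ℝ} (ht : t ∈ D) (hft : ContinuousAt f t)
    (ht' : deriv f t = 0) (hs : s ∈ D) (hst : s ≠ t) : f t < f s := by
  have hconv : StrictConvexOn ℝ D f := strictConvexOn_of_deriv2_pos' hD hf hf''
  have hmin : IsMinOn f D t := .of_isLocalMinOn_of_convexOn ht
    ((isLocalMin_of_deriv_deriv_pos (hf'' t ht) ht' hft).on D) hconv.convexOn
  refine (hmin hs).lt_of_ne fun heq ↦ hst ?_
  exact hconv.eq_of_isMinOn (fun u hu ↦ heq ▸ hmin hu) hmin hs ht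

theorem exists_forall_ball_prodMk_mem {X : Type*} [PseudoMetricSpace X] {K : Set X}
    (hK : IsCompact K) {U : Set (X × X)} (hU : IsOpen U) (hdiag : ∀ x ∈ K, (x, x) ∈ U) :
    ∃ ε > 0, ∀ x ∈ K, ∀ y ∈ Metric.ball x ε, (x, y) ∈ U := by
  obtain ⟨ε, hε, hsub⟩ := (hK.image (f := fun x : X ↦ (x, x)) (by fun_prop))
    |>.exists_thickening_subset_open hU (image_subset_iff.mpr hdiag)
  refine ⟨ε, hε, fun x hx y hy ↦ hsub (Metric.mem_thickening_iff.mpr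
    ⟨(x, x), mem_image_of_mem _ hx, ?_⟩)⟩
  rwa [Prod.dist_eq, dist_self, max_eq_right dist_nonneg]

namespace IsRegularCurve

variable {γ : ℝ → R3} {μ : ℝ}

theorem continuous_deriv_deriv_capDefect (hγ : IsRegularCurve γ) (μ : ℝ) :
    Continuous fun p : ℝ × ℝ ↦ deriv (deriv fun u ↦ capDefect γ μ p.1 (γ u)) p.2 := by
  have hcont : Continuous γ := hγ.smooth.continuous
  have hn := continuous_unitNormal hγ
  have hγ'' : Continuous (deriv (deriv γ)) :=
    (contDiff_infty_iff_deriv.mp hγ.smooth).2.continuous_deriv (by simp)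
  simp only [(hγ.hasDerivAt_deriv_capDefect _ _ _).deriv]
  fun_prop

theorem exists_forall_capDefect_pos (hγ : IsRegularCurve γ) {K : Set ℝ} (hK : IsCompact K)
    (hκ : ∀ t ∈ K, kappa γ t < μ) :
    ∃ ε > 0, ∀ t ∈ K, ∀ s, |s - t| < ε → s ≠ t → 0 < capDefect γ μ t (γ s) := by
  obtain ⟨ε, hε, hpos⟩ := exists_forall_ball_prodMk_mem hK
    (isOpen_lt continuous_const (hγ.continuous_deriv_deriv_capDefect μ)) fun t ht ↦ by
      rw [mem_ofPred, hγ.deriv_deriv_capDefect_self]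
      exact mul_pos (sub_pos.mpr (hκ t ht)) (pow_pos (norm3_pos (hγ.reg t)) 2)
  refine ⟨ε, hε, fun t ht s hs hst ↦ ?_⟩
  have hcont : Continuous fun u ↦ capDefect γ μ t (γ u) :=
    (hγ.continuous_capDefect μ).comp (Continuous.prodMk_right t)
  have hlt := lt_of_deriv2_pos (convex_ball t ε) hcont.continuousOn (hpos t ht)
    (Metric.mem_ball_self hε) hcont.continuousAt (hγ.deriv_capDefect_self μ t) hs hst
  rwa [hγ.capDefect_self] at hlt

end IsRegularCurve

/-! ### Supporting caps of a shell -/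

theorem exists_forall_le_mul_of_isCompact {X : Type*} [TopologicalSpace X] {K : Set X}
    (hK : IsCompact K) (hne : K.Nonempty) {f g : X → ℝ} (hf : ContinuousOn f K)
    (hg : ContinuousOn g K) (hpos : ∀ x ∈ K, 0 < g x) :
    ∃ r, (∀ x ∈ K, f x ≤ r * g x) ∧ ∃ x ∈ K, f x = r * g x := by
  obtain ⟨x, hx, hmax⟩ := hK.exists_isMaxOn hne (hf.div hg fun x hx ↦ (hpos x hx).ne')
  exact ⟨f x / g x, fun y hy ↦ (div_le_iff₀ (hpos y hy)).mp (hmax hy), x, hx,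
    (div_mul_cancel₀ _ (hpos x hx).ne').symm⟩

theorem exists_forall_nonneg_exists_eq_zero {X Y : Type*} [TopologicalSpace X]
    [TopologicalSpace Y] {F : X → Y → ℝ} (hF : Continuous ↿F) {K : Set Y} (hK : IsCompact K)
    {A : Set X} (hA : IsPreconnected A) {x₀ x₁ : X} (hx₀ : x₀ ∈ A) (hx₁ : x₁ ∈ A)
    (hneg : ∃ y ∈ K, F x₀ y < 0) (hnonneg : ∀ y ∈ K, 0 ≤ F x₁ y) :
    ∃ x ∈ A, (∀ y ∈ K, 0 ≤ F x y) ∧ ∃ y ∈ K, F x y = 0 := by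
  obtain ⟨y₀, hy₀, hlt⟩ := hneg
  have hFc (x : X) : ContinuousOn (F x) K := (hF.comp (Continuous.prodMk_right x)).continuousOn
  have hle (x : X) (y : Y) (hy : y ∈ K) : sInf (F x '' K) ≤ F x y :=
    csInf_le (hK.bddBelow_image (hFc x)) (mem_image_of_mem _ hy)
  have h₁ : 0 ≤ sInf (F x₁ '' K) :=
    le_csInf (image_nonempty.mpr ⟨y₀, hy₀⟩) (forall_mem_image.mpr hnonneg)
  obtain ⟨x, hx, h0⟩ := hA.intermediate_value hx₀ hx₁ (hK.continuous_sInf hF).continuousOn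
    ⟨(hle x₀ y₀ hy₀).trans hlt.le, h₁⟩
  obtain ⟨y, hy, hy0⟩ := hK.exists_sInf_image_eq ⟨y₀, hy₀⟩ (hFc x)
  exact ⟨x, hx, fun z hz ↦ h0.ge.trans (hle x z hz), y, hy, hy0.symm.trans h0⟩

namespace IsShell

variable {γ : ℝ → R3} {a b μ ε : ℝ}

theorem ne_of_mem_Ioo (hs : IsShell γ a b) {t s : ℝ} (ht : t ∈ Ioo a b) (hs' : s ∈ Icc a b)
    (hst : s ≠ t) : γ s ≠ γ t := by
  obtain ⟨hab, hinj, hclosed, -⟩ := hs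
  rcases hs'.2.eq_or_lt with rfl | hsb
  · exact hclosed ▸ hinj.ne (left_mem_Ico.mpr hab) (Ioo_subset_Ico_self ht) ht.1.ne
  · exact hinj.ne ⟨hs'.1, hsb⟩ (Ioo_subset_Ico_self ht) hst

/-- The tangent cap at `t` is shrunk, by raising the curvature of its boundary, until it contains no
point of the shell any more. -/
theorem exists_contact (hs : IsShell γ a b) (hγ : IsRegularCurve γ) {t : ℝ} (ht : t ∈ Ioo a b)
    (hε : 0 < ε) (hpos : ∀ s, |s - t| < ε → s ≠ t → 0 < capDefect γ μ t (γ s))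
    (hneg : ∃ s ∈ Icc a b, capDefect γ μ t (γ s) < 0) :
    ∃ ν, μ ≤ ν ∧ (∀ s ∈ Icc a b, 0 ≤ capDefect γ ν t (γ s)) ∧
      ∃ q ∈ Icc a b, q ≠ t ∧ capDefect γ ν t (γ q) = 0 := by
  obtain ⟨s₀, hs₀, hlt⟩ := hneg
  have hnonneg (s : ℝ) (hd : |s - t| < ε) : 0 ≤ capDefect γ μ t (γ s) := by
    rcases eq_or_ne s t with rfl | hst
    · exact (hγ.capDefect_self μ s).ge
    · exact (hpos s hd hst).le
  set K : Set ℝ := {s ∈ Icc a b | ε ≤ |s - t|}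
  have hK : IsCompact K := isCompact_Icc.inter_right (isClosed_le continuous_const
    (continuous_id.sub continuous_const).abs)
  have hKne (s : ℝ) (hsK : s ∈ K) : s ≠ t := by
    rintro rfl
    exact hε.not_ge (by simpa using hsK.2)
  have hden (s : ℝ) (hsK : s ∈ K) : 0 < 1 - dot3 (γ s) (γ t) := sub_pos.mpr <|
    dot3_lt_one_of_ne (hγ.sphere s) (hγ.sphere t) (hs.ne_of_mem_Ioo ht hsK.1 (hKne s hsK))
  have hs₀K : s₀ ∈ K := ⟨hs₀, not_lt.mp fun hd ↦ hlt.not_ge (hnonneg s₀ hd)⟩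
  have hcont : Continuous γ := hγ.smooth.continuous
  obtain ⟨ν, hle, q, hq, heq⟩ := exists_forall_le_mul_of_isCompact hK ⟨s₀, hs₀K⟩
    (f := fun s ↦ dot3 (γ s) (unitNormal γ t)) (g := fun s ↦ 1 - dot3 (γ s) (γ t))
    (by fun_prop) (by fun_prop) hden
  have hμν : μ ≤ ν := by
    rw [capDefect_eq] at hlt
    exact (lt_of_mul_lt_mul_right (by linarith [hle s₀ hs₀K]) (hden s₀ hs₀K).le).le
  refine ⟨ν, hμν, fun s hsI ↦ ?_, q, hq.1, hKne q hq, ?_⟩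
  · rcases lt_or_ge |s - t| ε with hd | hd
    · exact (hnonneg s hd).trans (hγ.capDefect_mono (hγ.sphere s) t hμν)
    · rw [capDefect_eq]
      exact sub_nonneg.mpr (hle s ⟨hsI, hd⟩)
  · rw [capDefect_eq]
    exact sub_eq_zero.mpr heq.symm

theorem isTouchingFamily (hs : IsShell γ a b) (hγ : IsRegularCurve γ) {c : ℝ → ℂ}
    {θ : ℝ → ℝ → ℝ} (hdefect : ∀ t ∈ Ioo a b, ∀ s ∈ Ioo a b, ∀ ν : ℝ,
      discDefect c θ (capDefect γ ν t (γ a) / 2) t (c s) =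
        capDefect γ ν t (γ s) / (1 - dot3 (γ s) (γ a)))
    {ν : ℝ → ℝ} (hsup : ∀ t ∈ Ioo a b, ∀ s ∈ Icc a b, 0 ≤ capDefect γ (ν t) t (γ s))
    (hcontact : ∀ t ∈ Ioo a b, ∃ q ∈ Icc a b, q ≠ t ∧ capDefect γ (ν t) t (γ q) = 0) :
    IsTouchingFamily a b c θ fun t ↦ capDefect γ (ν t) t (γ a) / 2 where
  curvature_nonneg t ht := div_nonneg (hsup t ht a (left_mem_Icc.mpr hs.1.le)) zero_le_two
  defect_nonneg t ht s hs' := by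
    have := dot3_lt_one_of_ne (hγ.sphere s) (hγ.sphere a)
      (hs.ne_of_mem_Ioo hs' (left_mem_Icc.mpr hs.1.le) hs'.1.ne).symm
    rw [hdefect t ht s hs']
    exact div_nonneg (hsup t ht s (Ioo_subset_Icc_self hs')) (sub_pos.mpr this).le
  exists_contact t ht := by
    obtain ⟨q, hq, hqt, h0⟩ := hcontact t ht
    rcases eq_or_ne (γ q) (γ a) with hqa | hqa
    · left
      rw [← hqa, h0, zero_div]
    · have haq : a < q := hq.1.lt_of_ne fun h ↦ hqa (h ▸ rfl)
      have hqb : q < b := hq.2.lt_of_ne fun h ↦ hqa (h ▸ hs.2.2.1.symm)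
      exact .inr ⟨q, ⟨haq, hqb⟩, hqt, by rw [hdefect t ht q ⟨haq, hqb⟩, h0, zero_div]⟩

theorem exists_supporting (hs : IsShell γ a b) (hγ : IsRegularCurve γ) (hε : 0 < ε)
    (hpos : ∀ t ∈ Icc a b, ∀ s, |s - t| < ε → s ≠ t → 0 < capDefect γ μ t (γ s)) :
    ∃ t ∈ Ioo a b, ∀ s ∈ Icc a b, 0 ≤ capDefect γ μ t (γ s) := by
  by_contra! hneg
  choose! ν hμν hsup hcontact using fun t ht ↦
    hs.exists_contact hγ ht hε (hpos t (Ioo_subset_Icc_self ht)) (hneg t ht)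
  have hpos' {t s : ℝ} (ht : t ∈ Ioo a b) (hd : |s - t| < ε) (hst : s ≠ t) :
      0 < capDefect γ (ν t) t (γ s) :=
    (hpos t (Ioo_subset_Icc_self ht) s hd hst).trans_le
      (hγ.capDefect_mono (hγ.sphere s) t (hμν t ht))
  obtain ⟨c, θ, H, hdefect⟩ := hγ.exists_isChordAngle hs.1 hs.2.1 hs.2.2.1
  obtain ⟨t, hat, ht⟩ := exists_between (lt_min (lt_add_of_pos_right a hε) hs.1)
  have htI : t ∈ Ioo a b := ⟨hat, ht.trans_le (min_le_right _ _)⟩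
  have had : |a - t| < ε := by
    rw [abs_sub_comm, abs_of_pos (sub_pos.mpr hat)]
    linarith [ht.trans_le (min_le_left _ _)]
  obtain ⟨t', ht', q, hq, hqt, h0, hd⟩ :=
    (hs.isTouchingFamily hγ hdefect hsup hcontact).exists_contact_abs_sub_lt H htI
      (half_pos (hpos' htI had hat.ne)) hε
  have hqa := dot3_lt_one_of_ne (hγ.sphere q) (hγ.sphere a)
    (hs.ne_of_mem_Ioo hq (left_mem_Icc.mpr hs.1.le) hq.1.ne).symm
  rw [hdefect t' ht' q hq] at h0
  exact (div_pos (hpos' ht' hd hqt) (sub_pos.mpr hqa)).ne' h0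

end IsShell

namespace IsPositiveShell

variable {γ : ℝ → R3} {a b μ : ℝ}

/-- Near the corner, the end of a positive shell lies to the left of its beginning. -/
theorem exists_capDefect_neg (hs : IsPositiveShell γ a b) (hγ : IsRegularCurve γ) (μ : ℝ) :
    ∃ t ∈ Ioo a b, ∃ s ∈ Icc a b, capDefect γ μ t (γ s) < 0 := by
  obtain ⟨⟨hab, -, hclosed, -⟩, hdet⟩ := hs
  have hderiv : 0 < deriv (fun s ↦ capDefect γ μ a (γ s)) b := by
    have hn := norm3_mul_dot3_unitNormal hγ a (deriv γ b)
    rw [det3_rotate] at hn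
    rw [(hγ.hasDerivAt_capDefect μ a b).deriv, dot3_add_right, dot3_smul_right,
      dot3_comm _ (γ a), hclosed, hγ.dot3_deriv, mul_zero, zero_add, neg_pos]
    exact neg_of_mul_neg_right (hn.trans_lt hdet) (norm3_nonneg _)
  have hleft : ∀ᶠ s in 𝓝[<] b, capDefect γ μ a (γ s) < 0 := by
    filter_upwards [nhdsWithin_le_nhds (eventually_nhdsWithin_sign_eq_of_deriv_pos hderiv
      (hclosed ▸ hγ.capDefect_self μ a)), self_mem_nhdsWithin] with s hs hsb
    rwa [← sign_eq_neg_one_iff, hs, sign_eq_neg_one_iff, sub_neg]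
  obtain ⟨s, hneg, hs⟩ := (hleft.and (Ioo_mem_nhdsLT hab)).exists
  have hcont : Continuous fun t ↦ capDefect γ μ t (γ s) :=
    (hγ.continuous_capDefect μ).comp (by fun_prop : Continuous fun t ↦ (t, s))
  have hright : ∀ᶠ t in 𝓝[>] a, capDefect γ μ t (γ s) < 0 :=
    nhdsWithin_le_nhds (hcont.tendsto a |>.eventually_lt_const hneg)
  obtain ⟨t, hneg, ht⟩ := (hright.and (Ioo_mem_nhdsGT hab)).exists
  exact ⟨t, ht, s, Ioo_subset_Icc_self hs, hneg⟩

theorem exists_double_contact (hs : IsPositiveShell γ a b) (hγ : IsRegularCurve γ)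
    (hκ : ∀ t ∈ Icc a b, kappa γ t < μ) :
    ∃ t ∈ Ioo a b, (∀ s ∈ Icc a b, 0 ≤ capDefect γ μ t (γ s)) ∧
      ∃ q ∈ Icc a b, q ≠ t ∧ capDefect γ μ t (γ q) = 0 := by
  obtain ⟨ε, hε, hpos⟩ := hγ.exists_forall_capDefect_pos isCompact_Icc hκ
  obtain ⟨t₀, ht₀, s₀, hs₀, hneg⟩ := hs.exists_capDefect_neg hγ μ
  obtain ⟨t₁, ht₁, hsup⟩ := hs.1.exists_supporting hγ hε hpos
  have hnear {t s : ℝ} (ht : t ∈ Ioo a b) (hd : |s - t| < ε) : 0 ≤ capDefect γ μ t (γ s) := by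
    rcases eq_or_ne s t with rfl | hst
    · exact (hγ.capDefect_self μ s).ge
    · exact (hpos t (Ioo_subset_Icc_self ht) s hd hst).le
  -- The second summand removes the trivial contact at `s = t` and vanishes away from it.
  set F : ℝ → ℝ → ℝ := fun t s ↦ capDefect γ μ t (γ s) + max 0 (ε - |s - t|)
  have hFeq {t s : ℝ} (hd : ε ≤ |s - t|) : F t s = capDefect γ μ t (γ s) := by
    simp only [F, max_eq_left (sub_nonpos.mpr hd), add_zero]
  have hF : Continuous ↿F :=
    (hγ.continuous_capDefect μ).add (by fun_prop)
  have hFneg : F t₀ s₀ < 0 :=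
    (hFeq (not_lt.mp fun hd ↦ hneg.not_ge (hnear ht₀ hd))).trans_lt hneg
  obtain ⟨t, ht, hFsup, q, hq, hFq⟩ := exists_forall_nonneg_exists_eq_zero hF isCompact_Icc
    isPreconnected_Ioo ht₀ ht₁ ⟨s₀, hs₀, hFneg⟩
    fun s hs' ↦ add_nonneg (hsup s hs') (le_max_left _ _)
  have hqd : ε ≤ |q - t| := by
    by_contra! hd
    have : ε - |q - t| ≤ 0 := (le_max_right _ _).trans (by linarith [hnear ht hd, hFq])
    linarith
  refine ⟨t, ht, fun s hs' ↦ ?_, q, hq, ?_, hFeq hqd ▸ hFq⟩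
  · rcases lt_or_ge |s - t| ε with hd | hd
    · exact hnear ht hd
    · exact hFeq hd ▸ hFsup s hs'
  · rintro rfl
    exact hε.not_ge (by simpa using hqd)

end IsPositiveShell

/-! ### Caps of the sphere -/

theorem dot3_normalize3_self {v : R3} (hv : v ≠ 0) :
    dot3 (normalize3 v) (normalize3 v) = 1 := by
  have h := norm3_pos hv
  rw [normalize3, dot3_smul_left, dot3_smul_right, ← norm3_sq]
  field_simp

theorem normalize3_of_unit {v : R3} (hv : dot3 v v = 1) : normalize3 v = v := by
  rw [normalize3, norm3, hv, Real.sqrt_one, inv_one, one_smul]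

theorem continuousAt_normalize3 {v : R3} (hv : v ≠ 0) : ContinuousAt normalize3 v := by
  have hnorm : Continuous norm3 := by unfold norm3; fun_prop
  exact (hnorm.continuousAt.inv₀ (norm3_pos hv).ne').smul continuousAt_id

theorem abs_div_sqrt_one_add_sq_lt_one (μ : ℝ) : |μ / √(1 + μ ^ 2)| < 1 := by
  have hr : 0 < √(1 + μ ^ 2) := by positivity
  rw [abs_div, abs_of_pos hr, div_lt_one hr, ← Real.sqrt_sq_eq_abs]
  exact Real.sqrt_lt_sqrt (sq_nonneg μ) (by linarith)

theorem smul_add_smul_ne_zero {x o : R3} (hx : dot3 x x = 1) (ho : dot3 o o = 1)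
    (hxo : -1 < dot3 x o) {α β : ℝ} (hαβ : 0 < α + β) : α • x + β • o ≠ 0 := by
  intro h
  have hdot : dot3 (α • x + β • o) (x + o) = (α + β) * (1 + dot3 x o) := by
    simp only [dot3_add_left, dot3_add_right, dot3_smul_left, hx, ho, dot3_comm o x]
    ring
  have hzero : dot3 0 (x + o) = 0 := by simp [dot3]
  rw [h, hzero] at hdot
  exact (mul_pos hαβ (by linarith)).ne hdot

theorem abs_norm3_smul_add_smul_sub_le {x o : R3} (hx : dot3 x x = 1) (ho : dot3 o o = 1)
    {α β : ℝ} (hα : 0 ≤ α) (hβ : 0 ≤ β) : |norm3 (α • x + β • o) - α| ≤ β := by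
  have hsq : norm3 (α • x + β • o) ^ 2 = α ^ 2 + 2 * (α * β) * dot3 x o + β ^ 2 := by
    rw [norm3_sq]
    simp only [dot3_add_left, dot3_add_right, dot3_smul_left, dot3_smul_right, hx, ho,
      dot3_comm o x]
    ring
  have hsub := dot3_self_nonneg (x - o)
  have hadd := dot3_self_nonneg (x + o)
  simp only [dot3_sub_sub_self hx ho, dot3_add_left, dot3_add_right, hx, ho, dot3_comm o x]
    at hsub hadd
  have hαβ := mul_nonneg hα hβ
  have hlower : |α - β| ≤ norm3 (α • x + β • o) :=
    abs_le_of_sq_le_sq (by nlinarith) (norm3_nonneg _)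
  have hupper : norm3 (α • x + β • o) ≤ α + β :=
    le_of_sq_le_sq (by nlinarith) (add_nonneg hα hβ)
  rw [abs_le]
  exact ⟨by linarith [le_abs_self (α - β)], by linarith⟩

theorem normalize3_smul_add_smul_mem_muDisk {μ : ℝ} {x o : R3} (hx : dot3 x x = 1)
    (ho : dot3 o o = 1) (hxo : μ / √(1 + μ ^ 2) ≤ dot3 x o) {α β : ℝ} (hα : 0 ≤ α)
    (hβ : 0 < β) : normalize3 (α • x + β • o) ∈ muDisk μ o := by
  have hμ := abs_div_sqrt_one_add_sq_lt_one μ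
  set c := μ / √(1 + μ ^ 2)
  have hv : α • x + β • o ≠ 0 :=
    smul_add_smul_ne_zero hx ho ((abs_lt.mp hμ).1.trans_le hxo) (by linarith)
  refine ⟨dot3_normalize3_self hv, ?_⟩
  rw [normalize3, dot3_smul_left, inv_mul_eq_div, lt_div_iff₀ (norm3_pos hv), dot3_add_left,
    dot3_smul_left, dot3_smul_left, ho, mul_one]
  set N := norm3 (α • x + β • o)
  have hN : |N - α| ≤ β := abs_norm3_smul_add_smul_sub_le hx ho hα hβ.le
  calc c * N = α * c + c * (N - α) := by ring
    _ ≤ α * dot3 x o + |c| * |N - α| := by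
      rw [← abs_mul]
      gcongr
      exact le_abs_self _
    _ ≤ α * dot3 x o + |c| * β := by gcongr
    _ < α * dot3 x o + β := by gcongr; exact mul_lt_of_lt_one_left hβ hμ

theorem isPreconnected_muDisk {o : R3} (ho : dot3 o o = 1) (μ : ℝ) :
    IsPreconnected (muDisk μ o) := by
  have hμ := abs_lt.mp (abs_div_sqrt_one_add_sq_lt_one μ)
  refine isPreconnected_of_forall o fun x ⟨hx, hxo⟩ ↦
    ⟨normalize3 '' segment ℝ x o, ?_, ⟨o, right_mem_segment ℝ x o, normalize3_of_unit ho⟩,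
      ⟨x, left_mem_segment ℝ x o, normalize3_of_unit hx⟩, ?_⟩
  · rintro - ⟨-, ⟨α, β, hα, hβ, hαβ, rfl⟩, rfl⟩
    rcases hβ.eq_or_lt with rfl | hβ
    · obtain rfl : α = 1 := by simpa using hαβ
      rw [one_smul, zero_smul, add_zero, normalize3_of_unit hx]
      exact ⟨hx, hxo⟩
    · exact normalize3_smul_add_smul_mem_muDisk hx ho hxo.le hα hβ
  · refine (convex_segment x o).isPreconnected.image _ ?_
    rintro - ⟨α, β, -, -, hαβ, rfl⟩
    exact (continuousAt_normalize3 (smul_add_smul_ne_zero hx ho (hμ.1.trans hxo)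
      (hαβ ▸ one_pos))).continuousWithinAt

theorem muCircle_subset_closure_muDisk {o : R3} (ho : dot3 o o = 1) (μ : ℝ) :
    muCircle μ o ⊆ closure (muDisk μ o) := by
  rintro x ⟨hx, hxo⟩
  have hx0 : x ≠ 0 := by
    rintro rfl
    simp [dot3] at hx
  have hlim : Tendsto (fun δ : ℝ ↦ normalize3 ((1 : ℝ) • x + δ • o)) (𝓝[>] 0) (𝓝 x) := by
    have hcont : ContinuousAt (fun δ : ℝ ↦ normalize3 ((1 : ℝ) • x + δ • o)) 0 :=
      ContinuousAt.comp (g := normalize3) (by simpa using continuousAt_normalize3 hx0)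
        (by fun_prop)
    simpa [normalize3_of_unit hx] using hcont.tendsto.mono_left nhdsWithin_le_nhds
  refine mem_closure_of_tendsto hlim ?_
  filter_upwards [self_mem_nhdsWithin] with δ hδ
  exact normalize3_smul_add_smul_mem_muDisk hx ho hxo.ge zero_le_one hδ

section TangentCap

variable {γ : ℝ → R3} {μ t : ℝ} {x : R3}

theorem capDefect_eq_sqrt_mul (γ : ℝ → R3) (μ t : ℝ) (x : R3) :
    capDefect γ μ t x =
      √(1 + μ ^ 2) * (μ / √(1 + μ ^ 2) - dot3 x (tangentCenter μ γ t)) := by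
  have : 0 < √(1 + μ ^ 2) := by positivity
  rw [capDefect, tangentCenter, dot3_smul_right]
  field_simp

theorem mem_muCircle_tangentCenter_iff :
    x ∈ muCircle μ (tangentCenter μ γ t) ↔ dot3 x x = 1 ∧ capDefect γ μ t x = 0 := by
  have hr : √(1 + μ ^ 2) ≠ 0 := by positivity
  rw [capDefect_eq_sqrt_mul, mul_eq_zero_iff_left hr, sub_eq_zero, eq_comm (a := _ / _)]
  rfl

theorem mem_muDisk_tangentCenter_iff :
    x ∈ muDisk μ (tangentCenter μ γ t) ↔ dot3 x x = 1 ∧ capDefect γ μ t x < 0 := by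
  have hr : 0 < √(1 + μ ^ 2) := by positivity
  rw [capDefect_eq_sqrt_mul, ← neg_pos, ← mul_neg, mul_pos_iff_of_pos_left hr, neg_sub,
    sub_pos]
  rfl

namespace IsRegularCurve

theorem dot3_tangentCenter_self (hγ : IsRegularCurve γ) (μ t : ℝ) :
    dot3 (tangentCenter μ γ t) (tangentCenter μ γ t) = 1 := by
  have hr : 0 < 1 + μ ^ 2 := by positivity
  simp only [tangentCenter, dot3_smul_left, dot3_smul_right, dot3_add_left, dot3_add_right,
    hγ.sphere, hγ.dot3_unitNormal_self, dot3_unitNormal, dot3_comm (unitNormal γ t) (γ t)]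
  field_simp
  rw [Real.sq_sqrt hr.le]
  ring

theorem eventually_normalize3_mem_muDisk (hγ : IsRegularCurve γ) (μ t : ℝ) :
    ∀ᶠ δ : ℝ in 𝓝[>] 0,
      normalize3 (γ t + δ • unitNormal γ t) ∈ muDisk μ (tangentCenter μ γ t) := by
  have hr : 0 < √(1 + μ ^ 2) := by positivity
  have hcircle : γ t ∈ muCircle μ (tangentCenter μ γ t) :=
    mem_muCircle_tangentCenter_iff.mpr ⟨hγ.sphere t, hγ.capDefect_self μ t⟩
  have hsmall : ∀ᶠ δ : ℝ in 𝓝[>] 0, 0 < 1 - δ * μ :=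
    nhdsWithin_le_nhds <| (by fun_prop : Continuous fun δ : ℝ ↦ 1 - δ * μ).tendsto 0
      |>.eventually_const_lt (by simp)
  filter_upwards [hsmall, self_mem_nhdsWithin] with δ hδμ (hδ : 0 < δ)
  have hcomb : γ t + δ • unitNormal γ t =
      (1 - δ * μ) • γ t + (δ * √(1 + μ ^ 2)) • tangentCenter μ γ t := by
    rw [tangentCenter, smul_smul, mul_assoc, mul_inv_cancel₀ hr.ne']
    module
  rw [hcomb]
  exact normalize3_smul_add_smul_mem_muDisk (hγ.sphere t) (hγ.dot3_tangentCenter_self μ t)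
    hcircle.2.ge hδμ.le (mul_pos hδ hr)

theorem muDisk_subset_interiorDomain (hγ : IsRegularCurve γ) {a b : ℝ} {Δ : Set R3}
    (hΔ : IsInteriorDomain γ a b 1 Δ) (ht : t ∈ Ioo a b)
    (hsup : ∀ s ∈ Icc a b, 0 ≤ capDefect γ μ t (γ s)) :
    muDisk μ (tangentCenter μ γ t) ⊆ Δ := by
  obtain ⟨⟨p, -, rfl⟩, hpush⟩ := hΔ
  obtain ⟨ε, hε, hmem⟩ := hpush t ht
  obtain ⟨δ, hdisk, hδ⟩ :=
    ((hγ.eventually_normalize3_mem_muDisk μ t).and (Ioo_mem_nhdsGT hε)).exists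
  have hcomp := hmem δ hδ
  rw [one_mul] at hcomp
  rw [connectedComponentIn_eq hcomp]
  refine (isPreconnected_muDisk (hγ.dot3_tangentCenter_self μ t) μ).subset_connectedComponentIn
    hdisk fun x hx ↦ ⟨hx.1, ?_⟩
  rintro ⟨s, hs, rfl⟩
  exact (mem_muDisk_tangentCenter_iff.mp hx).2.not_ge (hsup s hs)

end IsRegularCurve

end TangentCap

theorem stmt7_general (μ : ℝ) (γ : ℝ → R3) (a b : ℝ) (Δ : Set R3) (hγ : IsRegularCurve γ)
    (hκ : ∀ s ∈ Icc a b, kappa γ s < μ) (hshell : IsPositiveShell γ a b)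
    (hΔ : IsInteriorDomain γ a b 1 Δ) :
    ∃ o : R3, dot3 o o = 1 ∧ muCircle μ o ⊆ closure Δ ∧
      ∃ P Q : R3, P ≠ Q ∧ P ∈ muCircle μ o ∩ γ '' Icc a b ∧
        Q ∈ muCircle μ o ∩ γ '' Icc a b := by
  obtain ⟨t, ht, hsup, q, hq, hqt, hq0⟩ := hshell.exists_double_contact hγ hκ
  have ho := hγ.dot3_tangentCenter_self μ t
  have hmem {s : ℝ} (hs : capDefect γ μ t (γ s) = 0) : γ s ∈ muCircle μ (tangentCenter μ γ t) :=
    mem_muCircle_tangentCenter_iff.mpr ⟨hγ.sphere s, hs⟩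
  refine ⟨tangentCenter μ γ t, ho, ?_, γ q, γ t, hshell.1.ne_of_mem_Ioo ht hq hqt,
    ⟨hmem hq0, q, hq, rfl⟩, hmem (hγ.capDefect_self μ t), t, Ioo_subset_Icc_self ht, rfl⟩
  exact (muCircle_subset_closure_muDisk ho μ).trans
    (closure_mono (hγ.muDisk_subset_interiorDomain hΔ ht hsup))

end

theorem stmt7 (μ : ℝ) (γ2 : ℝ → R3) (l a2 b2 : ℝ) (Δ : Set R3)
    (hμ : 0 < μ) (hreg : IsRegularCurve γ2) (hper : HasPeriod γ2 l)
    (hκ : ∀ s, kappa γ2 s < μ) (hint : b2 - a2 < l)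
    (hshell : IsPositiveShell γ2 a2 b2)
    (hΔ : IsInteriorDomain γ2 a2 b2 1 Δ) :
    ∃ o : R3, dot3 o o = 1 ∧ muCircle μ o ⊆ closure Δ ∧
      ∃ P Q : R3, P ≠ Q ∧ P ∈ muCircle μ o ∩ γ2 '' Set.Icc a2 b2 ∧
        Q ∈ muCircle μ o ∩ γ2 '' Set.Icc a2 b2 :=
  stmt7_general μ γ2 a2 b2 Δ hreg (fun s _ ↦ hκ s) hshell hΔ
end
end
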